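/- arXiv:1810.12572 — 4 statements merged into one kernel-verified Lean document; each statement's English description precedes it below -/
import Mathlib

section
/- (A priori estimates for the δ-regularized solutions, uniform in δ.) Under the stated assumptions on Z, V, X, A, 𝕍, R and F, for every ρ > 0 there exists C(ρ) > 0 such that for all δ ∈ (0,1], all ℓ* ∈ V* and all z₀ ∈ Z with DI(z₀) ∈ V* and ‖z₀‖_Z + ‖ℓ*‖_{V*} ≤ ρ, the unique solution z_δ ∈ W^{2,∞}((0,∞);Z) of the δ-regularized inclusion 0 ∈ ∂R_δ(ż_δ(t)) + DI(z_δ(t)) − ℓ* with z_δ(0) = z₀ satisfies ess sup_{t>0} ‖ż_δ(t)‖_V + √δ · ess sup_{t>0} ‖ż_δ(t)‖_Z + ∫₀^∞ ‖ż_δ(t)‖_Z dt ≤ C(ρ)·(1 + dist_𝕍(−DI(z₀) + ℓ*, ∂R(0))). -/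
open MeasureTheory

/-- The dual norm `‖ξ‖_{𝕍⁻¹} = ⟨ξ, 𝕍⁻¹ξ⟩^{1/2}` of a functional `ξ ∈ V*`,
characterized as `sup {ξ v : ⟨𝕍v,v⟩ ≤ 1}`. -/
noncomputable def dualNormV {V : Type*} [NormedAddCommGroup V]
    [InnerProductSpace ℝ V] (VV : V →L[ℝ] V →L[ℝ] ℝ) (ξ : V →L[ℝ] ℝ) : ℝ :=
  sSup {r : ℝ | ∃ v : V, VV v v ≤ 1 ∧ r = ξ v}

/-- The subdifferential `∂R(0) = {σ ∈ V* : ⟨σ,w⟩ ≤ R(w) ∀ w ∈ V}`. -/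
def subdiffR0 {V X : Type*} [NormedAddCommGroup V] [InnerProductSpace ℝ V]
    [NormedAddCommGroup X] [NormedSpace ℝ X]
    (R : X → ℝ) (jVX : V →L[ℝ] X) : Set (V →L[ℝ] ℝ) :=
  {σ : V →L[ℝ] ℝ | ∀ w : V, σ w ≤ R (jVX w)}

/-- `dist_𝕍(ξ, ∂R(0)) = inf {‖ξ − σ‖_{𝕍⁻¹} : σ ∈ ∂R(0)}`. -/
noncomputable def distV {V X : Type*} [NormedAddCommGroup V]
    [InnerProductSpace ℝ V] [NormedAddCommGroup X] [NormedSpace ℝ X]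
    (VV : V →L[ℝ] V →L[ℝ] ℝ) (R : X → ℝ) (jVX : V →L[ℝ] X)
    (ξ : V →L[ℝ] ℝ) : ℝ :=
  sInf {r : ℝ | ∃ σ ∈ subdiffR0 R jVX, r = dualNormV VV (ξ - σ)}

/-- A `W^{2,∞}`-solution of the `δ`-regularized system
`0 ∈ ∂R_δ(ż(t)) + DI(z(t)) − ℓ*`, `z(0) = z₀`, with
`R_δ(v) = R(v) + ½⟨𝕍v,v⟩ + (δ/2)⟨Av,v⟩` and `DI(z) = Az + DF(z)`. -/
def IsRegSol {Z V X : Type*}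
    [NormedAddCommGroup Z] [InnerProductSpace ℝ Z]
    [NormedAddCommGroup V] [InnerProductSpace ℝ V]
    [NormedAddCommGroup X] [NormedSpace ℝ X]
    (jZV : Z →L[ℝ] V) (jVX : V →L[ℝ] X)
    (A : Z →L[ℝ] Z →L[ℝ] ℝ) (VV : V →L[ℝ] V →L[ℝ] ℝ) (R : X → ℝ)
    (DF : Z → V →L[ℝ] ℝ) (δ : ℝ) (lstar : V →L[ℝ] ℝ) (z₀ : Z)
    (z zd : ℝ → Z) : Prop :=
  z 0 = z₀ ∧
  (∃ K₁ : NNReal, LipschitzOnWith K₁ z (Set.Ici 0)) ∧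
  (∃ K₂ : NNReal, LipschitzOnWith K₂ zd (Set.Ici 0)) ∧
  (∀ t ≥ (0:ℝ), HasDerivWithinAt z (zd t) (Set.Ici 0) t) ∧
  (∀ t ≥ (0:ℝ), ∀ w : Z,
    R (jVX (jZV w)) + 1 / 2 * VV (jZV w) (jZV w) + δ / 2 * A w w ≥
      (R (jVX (jZV (zd t))) + 1 / 2 * VV (jZV (zd t)) (jZV (zd t))
        + δ / 2 * A (zd t) (zd t)) +
      (lstar (jZV (w - zd t))
        - (A (z t) (w - zd t) + DF (z t) (jZV (w - zd t)))))

/-!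
Write `B = 𝕍 + δ A` and measure the rate by `y = ⟨B ż, ż⟩^{1/2}`, which dominates both `‖ż‖_V` and
`√δ ‖ż‖_Z`. By homogeneity of `R` the inclusion says `R(w) + ⟨B ż + DI(z) - ℓ, w⟩ ≥ 0` for all `w`,
with equality for `w = ż`. Hence the energy decreases, which bounds `z` and `∫ R(ż)` in terms of
`ρ`; and comparing the equality at time `s` with the inequality at time `t` in direction `ż(s)`
gives, as `s ↓ t`, the differential inequality `y y' ≤ -⟨D²I(z) ż, ż⟩`. The form `A` contributes
`-α ‖ż‖_Z²`, while the contribution of `F` is at most `L ‖ż‖_Z ‖ż‖_V` on balls, where Ehrling's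
inequality (compactness of `Z → V`) trades `‖ż‖_V` for a small multiple of `‖ż‖_Z` plus `K R(ż)`.
Dividing by `y` one obtains `y' + κ ‖ż‖_Z ≤ P R(ż)` with `κ` and `P` independent of `δ ∈ (0, 1]`,
and integrates. Finally `y(0)² ≤ ⟨ℓ - DI(z₀) - σ, ż(0)⟩` for every `σ ∈ ∂R(0)`, so `y(0)` is at
most the distance of `ℓ - DI(z₀)` to `∂R(0)`.
-/

section Ehrling

lemma exists_norm_lt_add_mul_norm_of_isCompact {V X : Type*}
    [NormedAddCommGroup V] [NormedAddCommGroup X] {k : V → X} (hk : Continuous k)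
    (hk₀ : ∀ v, k v = 0 → v = 0) {S : Set V} (hS : IsCompact S) {ε : ℝ} (hε : 0 < ε) :
    ∃ n : ℕ, ∀ v ∈ S, ‖v‖ < ε + n * ‖k v‖ := by
  refine hS.elim_directed_cover (fun n : ℕ => {v | ‖v‖ < ε + n * ‖k v‖})
    (fun n => isOpen_lt continuous_norm (by fun_prop)) (fun v _ => Set.mem_iUnion.2 ?_)
    (Monotone.directed_le fun m n hmn v hv => lt_of_lt_of_le (Set.mem_ofPred.1 hv) (by gcongr))
  by_cases hv : v = 0
  · exact ⟨0, by simpa [hv] using hε⟩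
  · obtain ⟨n, hn⟩ := Archimedean.arch ‖v‖ (norm_pos_iff.2 (mt (hk₀ v) hv))
    exact ⟨n, hn.trans_lt (by rw [nsmul_eq_mul]; linarith)⟩

variable {Z V X : Type*} [NormedAddCommGroup Z] [NormedSpace ℝ Z]
  [NormedAddCommGroup V] [NormedSpace ℝ V] [NormedAddCommGroup X] [NormedSpace ℝ X]

theorem exists_norm_apply_le_mul_norm_add {j : Z →L[ℝ] V} (hj : IsCompactOperator j)
    {k : V →L[ℝ] X} (hk : Function.Injective k) {ε : ℝ} (hε : 0 < ε) :
    ∃ K : ℝ, 0 ≤ K ∧ ∀ z, ‖j z‖ ≤ ε * ‖z‖ + K * ‖k (j z)‖ := by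
  obtain ⟨n, hn⟩ := exists_norm_lt_add_mul_norm_of_isCompact k.continuous
    (fun v => (map_eq_zero_iff k hk).1) (hj.isCompact_closure_image_closedBall 1) hε
  refine ⟨n, n.cast_nonneg, fun z => ?_⟩
  rcases eq_or_ne z 0 with rfl | hz
  · simp
  have hz' : 0 < ‖z‖ := norm_pos_iff.2 hz
  have hunit : ‖‖z‖⁻¹ • z‖ = 1 := by simp [norm_smul, hz]
  have hlt : ‖j (‖z‖⁻¹ • z)‖ < ε + n * ‖k (j (‖z‖⁻¹ • z))‖ :=
    hn _ (subset_closure ⟨‖z‖⁻¹ • z, by simp [hunit], rfl⟩)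
  simp only [map_smul, norm_smul, norm_inv, norm_norm] at hlt
  calc ‖j z‖ = ‖z‖ * (‖z‖⁻¹ * ‖j z‖) := by field_simp
    _ ≤ ‖z‖ * (ε + n * (‖z‖⁻¹ * ‖k (j z)‖)) := mul_le_mul_of_nonneg_left hlt.le hz'.le
    _ = ε * ‖z‖ + n * ‖k (j z)‖ := by field_simp

end Ehrling

section LebesgueNorms

open Filter

variable {α E : Type*} [MeasurableSpace α] [NormedAddCommGroup E]

lemma eLpNorm_top_restrict_le_of_forall_mem_norm_le {μ : Measure α} {s : Set α}
    (hs : MeasurableSet s) {f : α → E} {C : ℝ} (hf : ∀ t ∈ s, ‖f t‖ ≤ C) :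
    eLpNorm f ⊤ (μ.restrict s) ≤ ENNReal.ofReal C := by
  rw [eLpNorm_exponent_top]
  exact eLpNormEssSup_le_of_ae_bound (ae_restrict_of_forall_mem hs hf)

lemma lintegral_enorm_Ioi_le_of_intervalIntegral_norm_le {μ : Measure ℝ} {f : ℝ → E} {a C : ℝ}
    (hf : ∀ b, IntegrableOn f (Set.Ioc a b) μ) (hC : ∀ b ≥ a, ∫ t in a..b, ‖f t‖ ∂μ ≤ C) :
    ∫⁻ t in Set.Ioi a, ‖f t‖ₑ ∂μ ≤ ENNReal.ofReal C := by
  have hev : ∀ᶠ b in atTop, ∫ t in a..b, ‖f t‖ ∂μ ≤ C := eventually_atTop.2 ⟨a, hC⟩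
  have hint : IntegrableOn f (Set.Ioi a) μ :=
    integrableOn_Ioi_of_intervalIntegral_norm_bounded C a hf tendsto_id hev
  rw [← ofReal_integral_norm_eq_lintegral_enorm hint]
  exact ENNReal.ofReal_le_ofReal
    (le_of_tendsto (intervalIntegral_tendsto_integral_Ioi a hint.norm tendsto_id) hev)

end LebesgueNorms

section EnergyNorm

variable {E : Type*} [NormedAddCommGroup E] [NormedSpace ℝ E]
  {B : E →L[ℝ] E →L[ℝ] ℝ} {β : ℝ} {u w : E}

/-- The norm `u ↦ ⟨B u, u⟩^{1/2}` of a positive semidefinite form `B`; it measures the rate in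
the a priori estimate. -/
noncomputable def energyNorm (B : E →L[ℝ] E →L[ℝ] ℝ) (u : E) : ℝ :=
  √(B u u)

lemma energyNorm_nonneg (B : E →L[ℝ] E →L[ℝ] ℝ) (u : E) : 0 ≤ energyNorm B u :=
  Real.sqrt_nonneg _

@[simp]
lemma energyNorm_zero (B : E →L[ℝ] E →L[ℝ] ℝ) : energyNorm B 0 = 0 := by
  simp [energyNorm]

lemma continuous_energyNorm (B : E →L[ℝ] E →L[ℝ] ℝ) : Continuous (energyNorm B) := by
  unfold energyNorm
  fun_prop

lemma apply_self_nonneg_of_coercive (hβ : 0 ≤ β) (hB : ∀ u, β * ‖u‖ ^ 2 ≤ B u u) (u : E) :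
    0 ≤ B u u :=
  (by positivity : 0 ≤ β * ‖u‖ ^ 2).trans (hB u)

lemma sqrt_mul_norm_le_energyNorm {F : Type*} [SeminormedAddCommGroup F] {x : F} (hβ : 0 ≤ β)
    (h : β * ‖x‖ ^ 2 ≤ B u u) : √β * ‖x‖ ≤ energyNorm B u :=
  Real.le_sqrt_of_sq_le (by rwa [mul_pow, Real.sq_sqrt hβ])

lemma energyNorm_le_sqrt_norm_mul_norm (B : E →L[ℝ] E →L[ℝ] ℝ) (u : E) :
    energyNorm B u ≤ √‖B‖ * ‖u‖ :=
  calc √(B u u) ≤ √(‖B‖ * ‖u‖ * ‖u‖) :=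
        Real.sqrt_le_sqrt ((le_abs_self _).trans (B.le_opNorm₂ u u))
    _ = √‖B‖ * ‖u‖ := by
        rw [mul_assoc, Real.sqrt_mul (norm_nonneg B), Real.sqrt_mul_self (norm_nonneg u)]

lemma apply_le_energyNorm_mul_energyNorm (hsymm : ∀ u w, B u w = B w u) (hB : ∀ u, 0 ≤ B u u)
    (u w : E) : B u w ≤ energyNorm B u * energyNorm B w := by
  rw [energyNorm, energyNorm, ← Real.sqrt_mul (hB u)]
  exact Real.le_sqrt_of_sq_le (LinearMap.BilinForm.apply_sq_le_of_symm B.toBilinForm hB ⟨hsymm⟩ u w)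

end EnergyNorm

section Primitive

open Set

variable {E : Type*} [NormedAddCommGroup E] [NormedSpace ℝ E] {f : ℝ → E} {a b : ℝ}

lemma continuousOn_primitive_Icc (hf : ContinuousOn f (Ici a)) (hab : a ≤ b) :
    ContinuousOn (fun x => ∫ t in a..x, f t) (Icc a b) := by
  rw [← uIcc_of_le hab]
  refine intervalIntegral.continuousOn_primitive_interval ?_
  rw [uIcc_of_le hab]
  exact (hf.mono Icc_subset_Ici_self).integrableOn_Icc

lemma hasDerivWithinAt_primitive_Ici [CompleteSpace E] (hf : ContinuousOn f (Ici a))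
    (hab : a ≤ b) : HasDerivWithinAt (fun x => ∫ t in a..x, f t) (f b) (Ici b) b := by
  refine intervalIntegral.integral_hasDerivWithinAt_right
    (ContinuousOn.intervalIntegrable_of_Icc hab (hf.mono Icc_subset_Ici_self)) (t := Ioi b)
    ((hf.mono ?_).stronglyMeasurableAtFilter_nhdsWithin measurableSet_Ioi b)
    ((hf b hab).mono ?_) <;>
  exact fun x hx => hab.trans (le_of_lt hx)

end Primitive

section DualNorm

variable {V X : Type*} [NormedAddCommGroup V] [InnerProductSpace ℝ V]
  [NormedAddCommGroup X] [NormedSpace ℝ X]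

lemma dualNormV_nonneg (VV : V →L[ℝ] V →L[ℝ] ℝ) (ξ : V →L[ℝ] ℝ) : 0 ≤ dualNormV VV ξ :=
  Real.sSup_nonneg' ⟨0, ⟨0, by simp⟩, le_rfl⟩

lemma distV_nonneg (VV : V →L[ℝ] V →L[ℝ] ℝ) (R : X → ℝ) (k : V →L[ℝ] X) (ξ : V →L[ℝ] ℝ) :
    0 ≤ distV VV R k ξ :=
  Real.sInf_nonneg (by rintro _ ⟨σ, -, rfl⟩; exact dualNormV_nonneg VV _)

variable {VV : V →L[ℝ] V →L[ℝ] ℝ} {γ : ℝ}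

lemma apply_le_dualNormV (hγ : 0 < γ) (hVV : ∀ v, γ * ‖v‖ ^ 2 ≤ VV v v) (ξ : V →L[ℝ] ℝ) {v : V}
    (hv : VV v v ≤ 1) : ξ v ≤ dualNormV VV ξ := by
  refine le_csSup ⟨‖ξ‖ * √(1 / γ), ?_⟩ ⟨v, hv, rfl⟩
  rintro _ ⟨w, hw, rfl⟩
  have hnorm : ‖w‖ ≤ √(1 / γ) :=
    Real.le_sqrt_of_sq_le ((le_div_iff₀' hγ).2 ((hVV w).trans hw))
  exact (le_abs_self _).trans (ξ.le_of_opNorm_le_of_le le_rfl hnorm)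

lemma apply_le_dualNormV_mul_energyNorm (hγ : 0 < γ) (hVV : ∀ v, γ * ‖v‖ ^ 2 ≤ VV v v)
    (ξ : V →L[ℝ] ℝ) (v : V) : ξ v ≤ dualNormV VV ξ * energyNorm VV v := by
  rcases eq_or_ne v 0 with rfl | hv
  · simp
  have hVVv : 0 < VV v v := (by positivity : 0 < γ * ‖v‖ ^ 2).trans_le (hVV v)
  have hpos : 0 < energyNorm VV v := Real.sqrt_pos.2 hVVv
  have hunit : VV ((energyNorm VV v)⁻¹ • v) ((energyNorm VV v)⁻¹ • v) ≤ 1 := by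
    have hsq : energyNorm VV v ^ 2 = VV v v := Real.sq_sqrt hVVv.le
    simp only [map_smul, _root_.smul_apply, smul_eq_mul, ← hsq]
    field_simp
    rfl
  have hle := apply_le_dualNormV hγ hVV ξ hunit
  rwa [map_smul, smul_eq_mul, inv_mul_le_iff₀' hpos] at hle

theorem le_distV_of_add_sq_le (hγ : 0 < γ) (hVV : ∀ v, γ * ‖v‖ ^ 2 ≤ VV v v) {R : X → ℝ}
    (hR : ∀ x, 0 ≤ R x) {k : V →L[ℝ] X} {ξ : V →L[ℝ] ℝ} {v : V} {y : ℝ}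
    (hvy : energyNorm VV v ≤ y) (h : R (k v) + y ^ 2 ≤ ξ v) : y ≤ distV VV R k ξ := by
  refine le_csInf ⟨_, 0, fun w => by simpa using hR _, rfl⟩ ?_
  rintro _ ⟨σ, hσ, rfl⟩
  have hdual : 0 ≤ dualNormV VV (ξ - σ) := dualNormV_nonneg VV _
  have hsq : y * y ≤ dualNormV VV (ξ - σ) * y :=
    calc y * y ≤ (ξ - σ) v := by rw [_root_.sub_apply]; linarith [hσ v]
      _ ≤ dualNormV VV (ξ - σ) * energyNorm VV v := apply_le_dualNormV_mul_energyNorm hγ hVV _ v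
      _ ≤ dualNormV VV (ξ - σ) * y := by gcongr
  rcases ((energyNorm_nonneg VV v).trans hvy).eq_or_lt with hy | hy
  · exact hy ▸ hdual
  · exact le_of_mul_le_mul_right hsq hy

end DualNorm

section FlowRule

open Filter Set Topology

variable {E : Type*} [NormedAddCommGroup E] [NormedSpace ℝ E]
  {r : E → ℝ} {B : E →L[ℝ] E →L[ℝ] ℝ} {f g : E →L[ℝ] ℝ} {u v : E}

/-- The subdifferential inclusion `0 ∈ ∂r(v) + B v + g` for the rate `v`, where `r` is the
rate-independent dissipation potential, `B` the viscosity form and `g` the driving force. -/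
def FlowRule (r : E → ℝ) (B : E →L[ℝ] E →L[ℝ] ℝ) (g : E →L[ℝ] ℝ) (v : E) : Prop :=
  ∀ w, r v ≤ r w + B v (w - v) + g (w - v)

lemma nonneg_of_forall_mul_add_sq_mul_nonneg {a b : ℝ}
    (h : ∀ s : ℝ, 0 < s → s ≤ 1 → 0 ≤ s * a + s ^ 2 * b) : 0 ≤ a := by
  have hlim : Tendsto (fun s : ℝ => a + s * b) (𝓝[>] 0) (𝓝 a) := by
    have : Continuous fun s : ℝ => a + s * b := by fun_prop
    simpa using (this.tendsto 0).mono_left nhdsWithin_le_nhds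
  refine ge_of_tendsto hlim ?_
  filter_upwards [Ioc_mem_nhdsGT one_pos] with s hs
  refine nonneg_of_mul_nonneg_right ?_ hs.1
  linarith [h s hs.1 hs.2]

theorem flowRule_of_isMinOn (hr : ConvexOn ℝ univ r) (hsymm : ∀ u w, B u w = B w u)
    (hmin : IsMinOn (fun w => r w + 1 / 2 * B w w + g w) univ v) : FlowRule r B g v := by
  intro w
  suffices 0 ≤ r w - r v + B v (w - v) + g (w - v) by linarith
  refine nonneg_of_forall_mul_add_sq_mul_nonneg (b := 1 / 2 * B (w - v) (w - v)) fun s hs hs1 => ?_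
  have hle : r v + 1 / 2 * B v v + g v ≤ r (v + s • (w - v))
      + 1 / 2 * B (v + s • (w - v)) (v + s • (w - v)) + g (v + s • (w - v)) :=
    hmin (mem_univ _)
  have hconv : r (v + s • (w - v)) ≤ (1 - s) * r v + s * r w := by
    have := hr.2 (mem_univ v) (mem_univ w) (sub_nonneg.2 hs1) hs.le (sub_add_cancel 1 s)
    rwa [show (1 - s) • v + s • w = v + s • (w - v) by module] at this
  simp only [map_add, map_smul, _root_.add_apply, _root_.smul_apply, smul_eq_mul,
    hsymm (w - v) v] at hle
  linarith

lemma FlowRule.eq_zero (hhom : ∀ s : ℝ, 0 ≤ s → ∀ u, r (s • u) = s * r u)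
    (h : FlowRule r B g v) : r v + B v v + g v = 0 := by
  have h₀ := h ((0 : ℝ) • v)
  have h₂ := h ((2 : ℝ) • v)
  rw [hhom 0 le_rfl, show (0 : ℝ) • v - v = -v by module, map_neg, map_neg] at h₀
  rw [hhom 2 zero_le_two, show (2 : ℝ) • v - v = v by module] at h₂
  linarith

lemma FlowRule.nonneg (hhom : ∀ s : ℝ, 0 ≤ s → ∀ u, r (s • u) = s * r u)
    (h : FlowRule r B g v) (w : E) : 0 ≤ r w + B v w + g w := by
  have hw := h w
  rw [map_sub, map_sub] at hw
  linarith [h.eq_zero hhom]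

lemma FlowRule.energyNorm_sub_mul_le (hsymm : ∀ u w, B u w = B w u) (hB : ∀ u, 0 ≤ B u u)
    (hhom : ∀ s : ℝ, 0 ≤ s → ∀ u, r (s • u) = s * r u) (hf : FlowRule r B f u)
    (hg : FlowRule r B g v) :
    (energyNorm B v - energyNorm B u) * energyNorm B v ≤ -(g - f) v := by
  have hsq : energyNorm B v * energyNorm B v = B v v := Real.mul_self_sqrt (hB v)
  rw [_root_.sub_apply]
  linarith [apply_le_energyNorm_mul_energyNorm hsymm hB u v, hf.nonneg hhom v, hg.eq_zero hhom]

end FlowRule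

section ViscousFlow

open Filter Set Topology

variable {E : Type*} [NormedAddCommGroup E] [NormedSpace ℝ E]
  {r : E → ℝ} {B : E →L[ℝ] E →L[ℝ] ℝ} {Φ : E → ℝ} {DΦ : E → E →L[ℝ] ℝ}
  {D2Φ : E → E →L[ℝ] E →L[ℝ] ℝ} {z v : ℝ → E}

/-- A `C¹` solution `z : [0, ∞) → E`, with rate `v = ż`, of the doubly nonlinear evolution
`0 ∈ ∂r(ż) + B ż + DΦ(z)` driven by the energy `Φ`. -/
structure IsViscousFlow (r : E → ℝ) (B : E →L[ℝ] E →L[ℝ] ℝ) (DΦ : E → E →L[ℝ] ℝ)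
    (z v : ℝ → E) : Prop where
  continuousOn_rate : ContinuousOn v (Ici 0)
  hasDerivWithinAt : ∀ t ≥ 0, HasDerivWithinAt z (v t) (Ici 0) t
  flowRule : ∀ t ≥ 0, FlowRule r B (DΦ (z t)) (v t)

namespace IsViscousFlow

lemma hasDerivWithinAt_energy (h : IsViscousFlow r B DΦ z v) (hΦ : ∀ x, HasFDerivAt Φ (DΦ x) x)
    {t : ℝ} (ht : 0 ≤ t) : HasDerivWithinAt (fun t => Φ (z t)) (DΦ (z t) (v t)) (Ici 0) t :=
  (hΦ (z t)).comp_hasDerivWithinAt t (h.hasDerivWithinAt t ht)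

lemma hasDerivWithinAt_force (h : IsViscousFlow r B DΦ z v)
    (hDΦ : ∀ x, HasFDerivAt DΦ (D2Φ x) x) {t : ℝ} (ht : 0 ≤ t) :
    HasDerivWithinAt (fun t => DΦ (z t)) (D2Φ (z t) (v t)) (Ici 0) t :=
  (hDΦ (z t)).comp_hasDerivWithinAt t (h.hasDerivWithinAt t ht)

theorem energy_antitoneOn (h : IsViscousFlow r B DΦ z v) (hΦ : ∀ x, HasFDerivAt Φ (DΦ x) x)
    (hr : ∀ u, 0 ≤ r u) (hhom : ∀ s : ℝ, 0 ≤ s → ∀ u, r (s • u) = s * r u)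
    (hB : ∀ u, 0 ≤ B u u) : AntitoneOn (fun t => Φ (z t)) (Ici 0) := by
  refine antitoneOn_of_hasDerivWithinAt_nonpos (f' := fun t => DΦ (z t) (v t)) (convex_Ici 0)
    (fun t ht => (h.hasDerivWithinAt_energy hΦ ht).continuousWithinAt) (fun t ht => ?_)
    (fun t ht => ?_)
  · exact (h.hasDerivWithinAt_energy hΦ (interior_subset ht)).mono interior_subset
  · linarith [(h.flowRule t (interior_subset ht)).eq_zero hhom, hr (v t), hB (v t)]

lemma slope_energyNorm_mul_le (h : IsViscousFlow r B DΦ z v) (hsymm : ∀ u w, B u w = B w u)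
    (hB : ∀ u, 0 ≤ B u u) (hhom : ∀ s : ℝ, 0 ≤ s → ∀ u, r (s • u) = s * r u)
    {s t : ℝ} (ht : 0 ≤ t) (hts : t < s) :
    slope (fun s => energyNorm B (v s)) t s * energyNorm B (v s)
      ≤ -(slope (fun s => DΦ (z s)) t s) (v s) := by
  have hle := (h.flowRule t ht).energyNorm_sub_mul_le hsymm hB hhom
    (h.flowRule s (ht.trans hts.le))
  have hinv : 0 ≤ (s - t)⁻¹ := inv_nonneg.2 (sub_nonneg.2 hts.le)
  simpa only [slope_def_module, smul_eq_mul, _root_.smul_apply, mul_assoc, mul_neg]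
    using mul_le_mul_of_nonneg_left hle hinv

lemma tendsto_rate (h : IsViscousFlow r B DΦ z v) {t : ℝ} (ht : 0 ≤ t) :
    Tendsto v (𝓝[>] t) (𝓝 (v t)) :=
  (h.continuousOn_rate t ht).tendsto.mono_left
    (nhdsWithin_mono t fun _ hs => ht.trans (le_of_lt hs))

lemma tendsto_slope_force (h : IsViscousFlow r B DΦ z v) (hDΦ : ∀ x, HasFDerivAt DΦ (D2Φ x) x)
    {t : ℝ} (ht : 0 ≤ t) :
    Tendsto (slope (fun s => DΦ (z s)) t) (𝓝[>] t) (𝓝 (D2Φ (z t) (v t))) :=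
  (hasDerivWithinAt_iff_tendsto_slope' self_notMem_Ioi).1
    ((h.hasDerivWithinAt_force hDΦ ht).mono fun _ hs => ht.trans (le_of_lt hs))

lemma eventually_slope_energyNorm_lt_of_pos (h : IsViscousFlow r B DΦ z v)
    (hDΦ : ∀ x, HasFDerivAt DΦ (D2Φ x) x) (hsymm : ∀ u w, B u w = B w u) (hB : ∀ u, 0 ≤ B u u)
    (hhom : ∀ s : ℝ, 0 ≤ s → ∀ u, r (s • u) = s * r u) {t b : ℝ} (ht : 0 ≤ t)
    (hpos : 0 < energyNorm B (v t))
    (hb : -D2Φ (z t) (v t) (v t) < energyNorm B (v t) * b) :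
    ∀ᶠ s in 𝓝[>] t, slope (fun s => energyNorm B (v s)) t s < b := by
  have hnorm : Tendsto (fun s => energyNorm B (v s)) (𝓝[>] t) (𝓝 (energyNorm B (v t))) :=
    ((continuous_energyNorm B).tendsto _).comp (h.tendsto_rate ht)
  have hforce : Tendsto (fun s => -(slope (fun s => DΦ (z s)) t s) (v s)) (𝓝[>] t)
      (𝓝 (-D2Φ (z t) (v t) (v t))) :=
    ((isBoundedBilinearMap_apply.continuous.tendsto (D2Φ (z t) (v t), v t)).comp
      ((h.tendsto_slope_force hDΦ ht).prodMk_nhds (h.tendsto_rate ht))).neg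
  filter_upwards [hforce.eventually_lt (hnorm.mul_const b) hb, hnorm.eventually_const_lt hpos,
    self_mem_nhdsWithin] with s hlt hs hts
  have hle := h.slope_energyNorm_mul_le hsymm hB hhom ht hts
  exact lt_of_mul_lt_mul_right ((hle.trans_lt hlt).trans_eq (mul_comm _ _)) hs.le

/-- Where the rate vanishes, `D2Φ (z t) (v t) = 0`, and coercivity of `B` turns the estimate for
the slope into `slope ≤ β^{-1/2} ‖slope of the force‖ → 0`. -/
lemma eventually_slope_energyNorm_lt_of_eq_zero (h : IsViscousFlow r B DΦ z v)
    (hDΦ : ∀ x, HasFDerivAt DΦ (D2Φ x) x) (hsymm : ∀ u w, B u w = B w u) {β : ℝ} (hβ : 0 < β)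
    (hB : ∀ u, β * ‖u‖ ^ 2 ≤ B u u) (hhom : ∀ s : ℝ, 0 ≤ s → ∀ u, r (s • u) = s * r u)
    {t b : ℝ} (ht : 0 ≤ t) (hzero : v t = 0) (hb : 0 < b) :
    ∀ᶠ s in 𝓝[>] t, slope (fun s => energyNorm B (v s)) t s < b := by
  have hforce : Tendsto (fun s => ‖slope (fun s => DΦ (z s)) t s‖) (𝓝[>] t) (𝓝 0) := by
    simpa only [hzero, map_zero, norm_zero] using (h.tendsto_slope_force hDΦ ht).norm
  have hsqrt : 0 < √β := Real.sqrt_pos.2 hβ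
  filter_upwards [hforce.eventually_lt_const (mul_pos hb hsqrt), self_mem_nhdsWithin] with s hs hts
  rcases eq_or_ne (v s) 0 with hvs | hvs
  · simpa [slope_def_module, hzero, hvs] using hb
  have hcoer : √β * ‖v s‖ ≤ energyNorm B (v s) := sqrt_mul_norm_le_energyNorm hβ.le (hB _)
  refine lt_of_mul_lt_mul_right ?_ (energyNorm_nonneg B (v s))
  calc slope (fun s => energyNorm B (v s)) t s * energyNorm B (v s)
      ≤ -(slope (fun s => DΦ (z s)) t s) (v s) :=
        h.slope_energyNorm_mul_le hsymm (apply_self_nonneg_of_coercive hβ.le hB) hhom ht hts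
    _ ≤ ‖slope (fun s => DΦ (z s)) t s‖ * ‖v s‖ :=
        (neg_le_abs _).trans ((slope (fun s => DΦ (z s)) t s).le_opNorm (v s))
    _ < b * √β * ‖v s‖ := mul_lt_mul_of_pos_right hs (norm_pos_iff.2 hvs)
    _ ≤ b * energyNorm B (v s) := by rw [mul_assoc]; gcongr

lemma eventually_slope_energyNorm_lt (h : IsViscousFlow r B DΦ z v)
    (hDΦ : ∀ x, HasFDerivAt DΦ (D2Φ x) x) (hsymm : ∀ u w, B u w = B w u) {β : ℝ} (hβ : 0 < β)
    (hB : ∀ u, β * ‖u‖ ^ 2 ≤ B u u) (hhom : ∀ s : ℝ, 0 ≤ s → ∀ u, r (s • u) = s * r u)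
    {t b b' : ℝ} (ht : 0 ≤ t) (hb : -D2Φ (z t) (v t) (v t) ≤ energyNorm B (v t) * b)
    (hb₀ : v t = 0 → 0 ≤ b) (hbb' : b < b') :
    ∀ᶠ s in 𝓝[>] t, slope (fun s => energyNorm B (v s)) t s < b' := by
  rcases eq_or_ne (v t) 0 with hzero | hzero
  · exact h.eventually_slope_energyNorm_lt_of_eq_zero hDΦ hsymm hβ hB hhom ht hzero
      ((hb₀ hzero).trans_lt hbb')
  · have hpos : 0 < energyNorm B (v t) :=
      (mul_pos (Real.sqrt_pos.2 hβ) (norm_pos_iff.2 hzero)).trans_le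
        (sqrt_mul_norm_le_energyNorm hβ.le (hB _))
    exact h.eventually_slope_energyNorm_lt_of_pos hDΦ hsymm (apply_self_nonneg_of_coercive hβ.le hB)
      hhom ht hpos (hb.trans_lt (mul_lt_mul_of_pos_left hbb' hpos))

/-- Integrating the differential inequality `y' ≤ P r(ż) - κ ‖ż‖` for `y = energyNorm B ż`; the
first term is controlled by the dissipated energy because `r(ż) ≤ -DΦ(z) ż`. -/
theorem energyNorm_add_mul_integral_le (h : IsViscousFlow r B DΦ z v)
    (hΦ : ∀ x, HasFDerivAt Φ (DΦ x) x) (hDΦ : ∀ x, HasFDerivAt DΦ (D2Φ x) x)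
    (hsymm : ∀ u w, B u w = B w u) {β : ℝ} (hβ : 0 < β) (hB : ∀ u, β * ‖u‖ ^ 2 ≤ B u u)
    (hr : ∀ u, 0 ≤ r u) (hhom : ∀ s : ℝ, 0 ≤ s → ∀ u, r (s • u) = s * r u)
    {P κ : ℝ} (hP : 0 ≤ P) (hD2Φ : ∀ t ≥ 0,
      -D2Φ (z t) (v t) (v t) ≤ energyNorm B (v t) * (P * r (v t) - κ * ‖v t‖))
    {t : ℝ} (ht : 0 ≤ t) :
    energyNorm B (v t) + κ * ∫ s in 0..t, ‖v s‖ ≤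
      energyNorm B (v 0) + P * (Φ (z 0) - Φ (z t)) := by
  have hv : ContinuousOn (fun s => ‖v s‖) (Ici 0) := h.continuousOn_rate.norm
  have hsub : Icc 0 t ⊆ Ici 0 := Icc_subset_Ici_self
  have hmajorant_cont : ContinuousOn (fun s => energyNorm B (v 0) + P * (Φ (z 0) - Φ (z s))
      - κ * ∫ τ in 0..s, ‖v τ‖) (Icc 0 t) := by
    have hΦz : ContinuousOn (fun s => Φ (z s)) (Icc 0 t) := fun s hs =>
      ((h.hasDerivWithinAt_energy hΦ hs.1).mono hsub).continuousWithinAt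
    exact (continuousOn_const.add (continuousOn_const.mul (continuousOn_const.sub hΦz))).sub
      (continuousOn_const.mul (continuousOn_primitive_Icc hv ht))
  have hmajorant_deriv : ∀ s ∈ Ico 0 t, HasDerivWithinAt (fun s => energyNorm B (v 0)
      + P * (Φ (z 0) - Φ (z s)) - κ * ∫ τ in 0..s, ‖v τ‖)
      (P * -DΦ (z s) (v s) - κ * ‖v s‖) (Ici s) s := fun s hs =>
    (((((h.hasDerivWithinAt_energy hΦ hs.1).mono (Ici_subset_Ici.2 hs.1)).const_sub
      (Φ (z 0))).const_mul P).const_add _).sub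
      ((hasDerivWithinAt_primitive_Ici hv hs.1).const_mul κ)
  have hle := image_le_of_liminf_slope_right_le_deriv_boundary
    ((continuous_energyNorm B).comp_continuousOn (h.continuousOn_rate.mono hsub)) (by simp)
    hmajorant_cont hmajorant_deriv (fun s hs b hb => ?_) (right_mem_Icc.2 ht)
  · simp only [Function.comp_apply] at hle
    linarith
  · have hdiss : r (v s) ≤ -DΦ (z s) (v s) := by
      linarith [(h.flowRule s hs.1).eq_zero hhom, apply_self_nonneg_of_coercive hβ.le hB (v s)]
    refine (h.eventually_slope_energyNorm_lt hDΦ hsymm hβ hB hhom hs.1 (hD2Φ s hs.1)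
      (fun hzero => ?_) (lt_of_le_of_lt (by gcongr) hb)).frequently
    simpa [hzero] using mul_nonneg hP (hr 0)

end IsViscousFlow

end ViscousFlow

section Balls

variable {E G H : Type*} [NormedAddCommGroup E] [NormedAddCommGroup G]
  [NormedAddCommGroup H]

/-- `f` maps balls to bounded sets; this is the form in which the growth condition on `D²F`
enters the estimates. -/
def IsBoundedOnBalls (f : E → G) : Prop :=
  ∀ M : ℝ, ∃ L : ℝ, ∀ x, ‖x‖ ≤ M → ‖f x‖ ≤ L

namespace IsBoundedOnBalls

variable [NormedSpace ℝ G] [NormedSpace ℝ H]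

lemma of_hasFDerivAt [NormedSpace ℝ E] {f : E → G} {f' : E → E →L[ℝ] G}
    (hf : ∀ x, HasFDerivAt f (f' x) x) (hf' : IsBoundedOnBalls f') : IsBoundedOnBalls f := by
  intro M
  obtain ⟨L, hL⟩ := hf' M
  refine ⟨‖f 0‖ + L * M, fun x hx => ?_⟩
  have hM : 0 ≤ M := (norm_nonneg x).trans hx
  have hL₀ : 0 ≤ L := (norm_nonneg _).trans (hL x hx)
  calc ‖f x‖ ≤ ‖f 0‖ + ‖f x - f 0‖ := norm_le_norm_add_norm_sub' _ _
    _ ≤ ‖f 0‖ + L * ‖x - 0‖ := by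
        gcongr
        exact (convex_closedBall (0 : E) M).norm_image_sub_le_of_norm_hasFDerivWithin_le
          (fun y _ => (hf y).hasFDerivWithinAt) (fun y hy => hL y (mem_closedBall_zero_iff.1 hy))
          (Metric.mem_closedBall_self hM) (mem_closedBall_zero_iff.2 hx)
    _ ≤ ‖f 0‖ + L * M := by rw [sub_zero]; gcongr

lemma comp_clm {f : E → G →L[ℝ] ℝ} (hf : IsBoundedOnBalls f) (j : H →L[ℝ] G) :
    IsBoundedOnBalls fun x => (f x).comp j := by
  intro M
  obtain ⟨L, hL⟩ := hf M
  refine ⟨L * ‖j‖, fun x hx => (ContinuousLinearMap.opNorm_comp_le _ _).trans ?_⟩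
  gcongr
  exact hL x hx

lemma of_norm_apply_le_rpow {T : E → H →L[ℝ] G} {C q : ℝ} (hC : 0 ≤ C) (hq : 0 ≤ q)
    (hT : ∀ x v, ‖T x v‖ ≤ C * (1 + ‖x‖ ^ q) * ‖v‖) : IsBoundedOnBalls T := by
  refine fun M => ⟨C * (1 + M ^ q), fun x hx => ?_⟩
  refine ((T x).opNorm_le_bound (by positivity) (hT x)).trans ?_
  gcongr

end IsBoundedOnBalls

end Balls

section Interpolation

variable {Z V X : Type*} [NormedAddCommGroup Z] [NormedSpace ℝ Z]
  [NormedAddCommGroup V] [NormedSpace ℝ V] [NormedAddCommGroup X] [NormedSpace ℝ X]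

lemma exists_neg_apply_apply_le {j : Z →L[ℝ] V} (hj : IsCompactOperator j) {k : V →L[ℝ] X}
    (hk : Function.Injective k) {R : X → ℝ} {c : ℝ} (hc : 0 < c) (hR : ∀ x, c * ‖x‖ ≤ R x)
    {T : Z → Z →L[ℝ] V →L[ℝ] ℝ} (hT : IsBoundedOnBalls T) {ε : ℝ} (hε : 0 < ε) (M : ℝ) :
    ∃ K : ℝ, ∀ x, ‖x‖ ≤ M → ∀ u, -T x u (j u) ≤ ε * ‖u‖ ^ 2 + K * R (k (j u)) * ‖u‖ := by
  obtain ⟨L, hL⟩ := hT M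
  have hL' : 0 < |L| + 1 := by positivity
  obtain ⟨K, hK, hjK⟩ := exists_norm_apply_le_mul_norm_add hj hk (div_pos hε hL')
  refine ⟨(|L| + 1) * K / c, fun x hx u => ?_⟩
  have hTx : ‖T x‖ ≤ |L| + 1 := (hL x hx).trans (by linarith [le_abs_self L])
  have hRu : ‖k (j u)‖ ≤ R (k (j u)) / c := (le_div_iff₀' hc).2 (hR _)
  calc -T x u (j u) ≤ ‖T x‖ * ‖u‖ * ‖j u‖ := (neg_le_abs _).trans ((T x).le_opNorm₂ u (j u))
    _ ≤ (|L| + 1) * ‖u‖ * (ε / (|L| + 1) * ‖u‖ + K * (R (k (j u)) / c)) := by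
        gcongr
        exact (hjK u).trans (by gcongr)
    _ = ε * ‖u‖ ^ 2 + (|L| + 1) * K / c * R (k (j u)) * ‖u‖ := by field_simp

/-- Young's inequality `k ρ n ≤ a n² / 2 + k² ρ² / (2 a)`, with `ρ² ≤ D ρ y` and
`a n y / (2 c₁) ≤ a n² / 2` used to extract the factor `y`. -/
lemma neg_mul_sq_add_mul_le {a c₁ D k n y ρ : ℝ} (ha : 0 < a) (hc₁ : 0 < c₁) (hn : 0 ≤ n)
    (hρ : 0 ≤ ρ) (hρy : ρ ≤ D * y) (hyn : y ≤ c₁ * n) :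
    -(a * n ^ 2) + k * ρ * n ≤ y * (k ^ 2 * D / (2 * a) * ρ - a / (2 * c₁) * n) := by
  have hyoung : k * ρ * n ≤ a / 2 * n ^ 2 + k ^ 2 / (2 * a) * ρ ^ 2 := by
    have hsq : 0 ≤ (a * n - k * ρ) ^ 2 / (2 * a) := by positivity
    have hexp : (a * n - k * ρ) ^ 2 / (2 * a) =
        a / 2 * n ^ 2 + k ^ 2 / (2 * a) * ρ ^ 2 - k * ρ * n := by field_simp; ring
    linarith
  have hdiss : k ^ 2 / (2 * a) * ρ ^ 2 ≤ y * (k ^ 2 * D / (2 * a) * ρ) :=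
    calc k ^ 2 / (2 * a) * ρ ^ 2 = k ^ 2 / (2 * a) * (ρ * ρ) := by ring
      _ ≤ k ^ 2 / (2 * a) * (ρ * (D * y)) := by gcongr
      _ = y * (k ^ 2 * D / (2 * a) * ρ) := by ring
  have hdecay : y * (a / (2 * c₁) * n) ≤ a / 2 * n ^ 2 :=
    calc y * (a / (2 * c₁) * n) ≤ c₁ * n * (a / (2 * c₁) * n) := by gcongr
      _ = a / 2 * n ^ 2 := by field_simp
  linarith

end Interpolation

section TiltedEnergy

variable {Z V : Type*} [NormedAddCommGroup Z] [NormedSpace ℝ Z]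
  [NormedAddCommGroup V] [NormedSpace ℝ V]

/-- The energy `I(x) - ⟨ℓ, x⟩ = ½ ⟨A x, x⟩ + F x - ⟨ℓ, x⟩`, with the load `ℓ ∈ V*` absorbed. -/
noncomputable def tiltedEnergy (j : Z →L[ℝ] V) (A : Z →L[ℝ] Z →L[ℝ] ℝ) (F : Z → ℝ)
    (ℓ : V →L[ℝ] ℝ) (x : Z) : ℝ :=
  1 / 2 * A x x + F x - ℓ (j x)

/-- The derivative `DI(x) - ℓ` of `tiltedEnergy`, as a functional on `Z`. -/
noncomputable def tiltedEnergyDeriv (j : Z →L[ℝ] V) (A : Z →L[ℝ] Z →L[ℝ] ℝ) (DF : Z → V →L[ℝ] ℝ)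
    (ℓ : V →L[ℝ] ℝ) (x : Z) : Z →L[ℝ] ℝ :=
  A x + (DF x).comp j - ℓ.comp j

/-- The second derivative `A + D²F(x)` of `tiltedEnergy`, as a bilinear form on `Z`. -/
noncomputable def tiltedEnergyHessian (j : Z →L[ℝ] V) (A : Z →L[ℝ] Z →L[ℝ] ℝ)
    (D2F : Z → Z →L[ℝ] V →L[ℝ] ℝ) (x : Z) : Z →L[ℝ] Z →L[ℝ] ℝ :=
  A + ((ContinuousLinearMap.compL ℝ Z V ℝ).flip j).comp (D2F x)

variable {j : Z →L[ℝ] V} {A : Z →L[ℝ] Z →L[ℝ] ℝ} {F : Z → ℝ} {DF : Z → V →L[ℝ] ℝ}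
  {D2F : Z → Z →L[ℝ] V →L[ℝ] ℝ} {ℓ : V →L[ℝ] ℝ} {α ρ : ℝ}

lemma hasFDerivAt_tiltedEnergy (hA : ∀ x y, A x y = A y x)
    (hDF : ∀ x, HasFDerivAt F ((DF x).comp j) x) (ℓ : V →L[ℝ] ℝ) (x : Z) :
    HasFDerivAt (tiltedEnergy j A F ℓ) (tiltedEnergyDeriv j A DF ℓ x) x := by
  have hquad : HasFDerivAt (fun x => 1 / 2 * A x x) (A x) x := by
    refine ((A.hasFDerivAt.clm_apply (hasFDerivAt_id x)).const_mul (1 / 2)).congr_fderiv ?_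
    ext y
    simp only [one_div, ContinuousLinearMap.comp_id, id_eq, smul_add, _root_.add_apply,
      _root_.smul_apply, smul_eq_mul, ContinuousLinearMap.flip_apply, hA y x]
    ring
  exact (hquad.add (hDF x)).sub (ℓ.comp j).hasFDerivAt

lemma hasFDerivAt_tiltedEnergyDeriv (hD2F : ∀ x, HasFDerivAt DF (D2F x) x) (ℓ : V →L[ℝ] ℝ)
    (x : Z) :
    HasFDerivAt (tiltedEnergyDeriv j A DF ℓ) (tiltedEnergyHessian j A D2F x) x :=
  (A.hasFDerivAt.add (((ContinuousLinearMap.compL ℝ Z V ℝ).flip j).hasFDerivAt.comp x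
    (hD2F x))).sub_const _

lemma exists_tiltedEnergy_le (j : Z →L[ℝ] V) (A : Z →L[ℝ] Z →L[ℝ] ℝ) (hF : IsBoundedOnBalls F)
    (ρ : ℝ) : ∃ e, ∀ ℓ x, ‖x‖ + ‖ℓ‖ ≤ ρ → tiltedEnergy j A F ℓ x ≤ e := by
  obtain ⟨L, hL⟩ := hF ρ
  refine ⟨1 / 2 * (‖A‖ * ρ * ρ) + L + ρ * (‖j‖ * ρ), fun ℓ x hx => ?_⟩
  have hxρ : ‖x‖ ≤ ρ := by linarith [norm_nonneg ℓ]
  have hℓρ : ‖ℓ‖ ≤ ρ := by linarith [norm_nonneg x]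
  have hAx : A x x ≤ ‖A‖ * ρ * ρ := (le_abs_self _).trans (A.le_of_opNorm₂_le_of_le le_rfl hxρ hxρ)
  have hFx : F x ≤ L := (le_abs_self _).trans (hL x hxρ)
  have hℓx : -ℓ (j x) ≤ ρ * (‖j‖ * ρ) :=
    (neg_le_abs _).trans (ℓ.le_of_opNorm_le_of_le hℓρ (j.le_of_opNorm_le_of_le le_rfl hxρ))
  rw [tiltedEnergy]
  linarith

lemma mul_sq_sub_mul_le_tiltedEnergy (hA : ∀ x, α * ‖x‖ ^ 2 ≤ A x x) (hF : ∀ x, 0 ≤ F x)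
    (hℓ : ‖ℓ‖ ≤ ρ) (x : Z) :
    α / 2 * ‖x‖ ^ 2 - ρ * ‖j‖ * ‖x‖ ≤ tiltedEnergy j A F ℓ x := by
  have hℓx : ℓ (j x) ≤ ρ * (‖j‖ * ‖x‖) :=
    (le_abs_self _).trans (ℓ.le_of_opNorm_le_of_le hℓ (j.le_opNorm x))
  rw [tiltedEnergy]
  linarith [hA x, hF x]

/-- Completing the square: `b n ≤ α n² / 4 + b² / α` with `b = ρ ‖j‖` and `n = ‖x‖`. -/
lemma mul_sq_sub_div_le_tiltedEnergy (hα : 0 < α) (hA : ∀ x, α * ‖x‖ ^ 2 ≤ A x x)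
    (hF : ∀ x, 0 ≤ F x) (hℓ : ‖ℓ‖ ≤ ρ) (x : Z) :
    α / 4 * ‖x‖ ^ 2 - (ρ * ‖j‖) ^ 2 / α ≤ tiltedEnergy j A F ℓ x := by
  have hsq : 0 ≤ (α / 2 * ‖x‖ - ρ * ‖j‖) ^ 2 / α := by positivity
  have hexp : (α / 2 * ‖x‖ - ρ * ‖j‖) ^ 2 / α =
      α / 4 * ‖x‖ ^ 2 - ρ * ‖j‖ * ‖x‖ + (ρ * ‖j‖) ^ 2 / α := by field_simp; ring
  linarith [mul_sq_sub_mul_le_tiltedEnergy (j := j) hA hF hℓ x]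

theorem exists_norm_le_of_tiltedEnergy_le (j : Z →L[ℝ] V) (hα : 0 < α)
    (hA : ∀ x, α * ‖x‖ ^ 2 ≤ A x x) (hF : ∀ x, 0 ≤ F x) (hF_bdd : IsBoundedOnBalls F) (ρ : ℝ) :
    ∃ M, ∀ ℓ x₀ x, ‖x₀‖ + ‖ℓ‖ ≤ ρ → tiltedEnergy j A F ℓ x ≤ tiltedEnergy j A F ℓ x₀ →
      ‖x‖ ≤ M ∧ tiltedEnergy j A F ℓ x₀ - tiltedEnergy j A F ℓ x ≤ M := by
  obtain ⟨e, he⟩ := exists_tiltedEnergy_le j A hF_bdd ρ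
  set d := e + (ρ * ‖j‖) ^ 2 / α
  refine ⟨max (√(4 / α * d)) d, fun ℓ x₀ x hx₀ hx => ?_⟩
  have hlow := mul_sq_sub_div_le_tiltedEnergy (j := j) hα hA hF
    (by linarith [norm_nonneg x₀] : ‖ℓ‖ ≤ ρ) x
  have hhigh := he ℓ x₀ hx₀
  constructor
  · refine le_max_of_le_left (Real.le_sqrt_of_sq_le ?_)
    calc ‖x‖ ^ 2 = 4 / α * (α / 4 * ‖x‖ ^ 2) := by field_simp
      _ ≤ 4 / α * d := by gcongr; linarith
  · have hquad : 0 ≤ α / 4 * ‖x‖ ^ 2 := by positivity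
    exact le_max_of_le_right (by linarith)

end TiltedEnergy

section RegularizedForm

variable {Z V : Type*} [NormedAddCommGroup Z] [NormedSpace ℝ Z]
  [NormedAddCommGroup V] [NormedSpace ℝ V]

/-- The viscosity form `𝕍 + δ A` on `Z` of the `δ`-regularized system. -/
noncomputable def regForm (j : Z →L[ℝ] V) (A : Z →L[ℝ] Z →L[ℝ] ℝ) (VV : V →L[ℝ] V →L[ℝ] ℝ)
    (δ : ℝ) : Z →L[ℝ] Z →L[ℝ] ℝ :=
  VV.bilinearComp j j + δ • A

variable {j : Z →L[ℝ] V} {A : Z →L[ℝ] Z →L[ℝ] ℝ} {VV : V →L[ℝ] V →L[ℝ] ℝ} {α γ δ : ℝ}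

lemma regForm_apply (u w : Z) : regForm j A VV δ u w = VV (j u) (j w) + δ * A u w :=
  rfl

lemma regForm_symm (hA : ∀ u w, A u w = A w u) (hVV : ∀ u w, VV u w = VV w u) (u w : Z) :
    regForm j A VV δ u w = regForm j A VV δ w u := by
  rw [regForm_apply, regForm_apply, hA, hVV]

lemma apply_self_le_regForm (hδ : 0 ≤ δ) (hA : ∀ u, 0 ≤ A u u) (u : Z) :
    VV (j u) (j u) ≤ regForm j A VV δ u u :=
  le_add_of_nonneg_right (mul_nonneg hδ (hA u))

lemma mul_apply_self_le_regForm (hVV : ∀ v, 0 ≤ VV v v) (u : Z) :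
    δ * A u u ≤ regForm j A VV δ u u :=
  le_add_of_nonneg_left (hVV (j u))

lemma mul_sq_le_regForm (hδ : 0 ≤ δ) (hA : ∀ u, α * ‖u‖ ^ 2 ≤ A u u) (hVV : ∀ v, 0 ≤ VV v v)
    (u : Z) : δ * α * ‖u‖ ^ 2 ≤ regForm j A VV δ u u :=
  calc δ * α * ‖u‖ ^ 2 = δ * (α * ‖u‖ ^ 2) := mul_assoc _ _ _
    _ ≤ δ * A u u := mul_le_mul_of_nonneg_left (hA u) hδ
    _ ≤ regForm j A VV δ u u := mul_apply_self_le_regForm hVV u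

lemma norm_regForm_le (hδ : 0 ≤ δ) (hδ₁ : δ ≤ 1) :
    ‖regForm j A VV δ‖ ≤ ‖VV‖ * ‖j‖ * ‖j‖ + ‖A‖ := by
  refine ContinuousLinearMap.opNorm_le_bound₂ _ (by positivity) fun u w => ?_
  have hVV : ‖VV (j u) (j w)‖ ≤ ‖VV‖ * (‖j‖ * ‖u‖) * (‖j‖ * ‖w‖) :=
    VV.le_of_opNorm₂_le_of_le le_rfl (j.le_opNorm u) (j.le_opNorm w)
  have hA : ‖δ * A u w‖ ≤ 1 * (‖A‖ * ‖u‖ * ‖w‖) := by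
    rw [norm_mul, Real.norm_of_nonneg hδ]
    exact mul_le_mul hδ₁ (A.le_opNorm₂ u w) (norm_nonneg _) zero_le_one
  calc ‖regForm j A VV δ u w‖ ≤ ‖VV (j u) (j w)‖ + ‖δ * A u w‖ := norm_add_le _ _
    _ ≤ ‖VV‖ * (‖j‖ * ‖u‖) * (‖j‖ * ‖w‖) + 1 * (‖A‖ * ‖u‖ * ‖w‖) := add_le_add hVV hA
    _ = (‖VV‖ * ‖j‖ * ‖j‖ + ‖A‖) * ‖u‖ * ‖w‖ := by ring

lemma sqrt_mul_norm_apply_le_energyNorm_regForm (hδ : 0 ≤ δ) (hA : ∀ u, 0 ≤ A u u) (hγ : 0 ≤ γ)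
    (hVV : ∀ v, γ * ‖v‖ ^ 2 ≤ VV v v) (u : Z) :
    √γ * ‖j u‖ ≤ energyNorm (regForm j A VV δ) u :=
  sqrt_mul_norm_le_energyNorm hγ ((hVV _).trans (apply_self_le_regForm hδ hA u))

lemma sqrt_mul_sqrt_mul_norm_le_energyNorm_regForm (hδ : 0 ≤ δ) (hα : 0 ≤ α)
    (hA : ∀ u, α * ‖u‖ ^ 2 ≤ A u u) (hVV : ∀ v, 0 ≤ VV v v) (u : Z) :
    √α * (√δ * ‖u‖) ≤ energyNorm (regForm j A VV δ) u := by
  rw [← mul_assoc, ← Real.sqrt_mul hα, mul_comm α]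
  exact sqrt_mul_norm_le_energyNorm (mul_nonneg hδ hα) (mul_sq_le_regForm hδ hA hVV u)

lemma energyNorm_regForm_le (hδ : 0 ≤ δ) (hδ₁ : δ ≤ 1) (u : Z) :
    energyNorm (regForm j A VV δ) u ≤ √(‖VV‖ * ‖j‖ * ‖j‖ + ‖A‖ + 1) * ‖u‖ := by
  refine (energyNorm_le_sqrt_norm_mul_norm _ u).trans ?_
  gcongr
  linarith [norm_regForm_le (j := j) (A := A) (VV := VV) hδ hδ₁]

lemma apply_le_mul_energyNorm_regForm {X : Type*} [NormedAddCommGroup X] [NormedSpace ℝ X]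
    {k : V →L[ℝ] X} {R : X → ℝ} {C : ℝ} (hC : 0 ≤ C) (hR : ∀ x, R x ≤ C * ‖x‖) (hδ : 0 ≤ δ)
    (hA : ∀ u, 0 ≤ A u u) (hγ : 0 < γ) (hVV : ∀ v, γ * ‖v‖ ^ 2 ≤ VV v v) (u : Z) :
    R (k (j u)) ≤ C * ‖k‖ / √γ * energyNorm (regForm j A VV δ) u := by
  have hsqrt : √γ ≠ 0 := (Real.sqrt_pos.2 hγ).ne'
  calc R (k (j u)) ≤ C * ‖k (j u)‖ := hR _
    _ ≤ C * (‖k‖ * ‖j u‖) := by gcongr; exact k.le_opNorm _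
    _ = C * ‖k‖ / √γ * (√γ * ‖j u‖) := by field_simp
    _ ≤ C * ‖k‖ / √γ * energyNorm (regForm j A VV δ) u := by
        gcongr
        exact sqrt_mul_norm_apply_le_energyNorm_regForm hδ hA hγ.le hVV u

end RegularizedForm

section RegularizedFlow

open Set

variable {Z V X : Type*} [NormedAddCommGroup Z] [NormedSpace ℝ Z]
  [NormedAddCommGroup V] [NormedSpace ℝ V] [NormedAddCommGroup X] [NormedSpace ℝ X]

/-- A `C¹` solution of the `δ`-regularized inclusion `0 ∈ ∂R_δ(ż) + DI(z) - ℓ`, in the form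
`0 ∈ ∂R(ż) + (𝕍 + δ A) ż + DI(z) - ℓ`. -/
abbrev IsRegFlow (j : Z →L[ℝ] V) (k : V →L[ℝ] X) (A : Z →L[ℝ] Z →L[ℝ] ℝ)
    (VV : V →L[ℝ] V →L[ℝ] ℝ) (R : X → ℝ) (DF : Z → V →L[ℝ] ℝ) (δ : ℝ) (ℓ : V →L[ℝ] ℝ)
    (z v : ℝ → Z) : Prop :=
  IsViscousFlow (fun u => R (k (j u))) (regForm j A VV δ) (tiltedEnergyDeriv j A DF ℓ) z v

variable {j : Z →L[ℝ] V} {k : V →L[ℝ] X} {A : Z →L[ℝ] Z →L[ℝ] ℝ} {VV : V →L[ℝ] V →L[ℝ] ℝ}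
  {R : X → ℝ} {F : Z → ℝ} {DF : Z → V →L[ℝ] ℝ} {D2F : Z → Z →L[ℝ] V →L[ℝ] ℝ} {α γ c C : ℝ}

lemma comp_homogeneous (hR : ∀ s : ℝ, 0 ≤ s → ∀ x, R (s • x) = s * R x) (s : ℝ) (hs : 0 ≤ s)
    (u : Z) : R (k (j (s • u))) = s * R (k (j u)) := by
  rw [map_smul, map_smul, hR s hs]

theorem exists_energyNorm_add_mul_integral_le (hj : IsCompactOperator j)
    (hk : Function.Injective k) (hA_symm : ∀ u w, A u w = A w u) (hα : 0 < α)
    (hA : ∀ u, α * ‖u‖ ^ 2 ≤ A u u) (hVV_symm : ∀ u w, VV u w = VV w u) (hγ : 0 < γ)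
    (hVV : ∀ v, γ * ‖v‖ ^ 2 ≤ VV v v) (hR_hom : ∀ s : ℝ, 0 ≤ s → ∀ x, R (s • x) = s * R x)
    (hc : 0 < c) (hC : 0 ≤ C) (hR_low : ∀ x, c * ‖x‖ ≤ R x) (hR_up : ∀ x, R x ≤ C * ‖x‖)
    (hF : ∀ x, 0 ≤ F x) (hDF : ∀ x, HasFDerivAt F ((DF x).comp j) x)
    (hD2F : ∀ x, HasFDerivAt DF (D2F x) x) (hD2F_bdd : IsBoundedOnBalls D2F) (ρ : ℝ) :
    ∃ κ > 0, ∃ Q ≥ 0, ∀ δ, 0 < δ → δ ≤ 1 → ∀ ℓ z v, ‖z 0‖ + ‖ℓ‖ ≤ ρ →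
      IsRegFlow j k A VV R DF δ ℓ z v → ∀ t ≥ 0,
        energyNorm (regForm j A VV δ) (v t) + κ * ∫ s in 0..t, ‖v s‖ ≤
          energyNorm (regForm j A VV δ) (v 0) + Q := by
  obtain ⟨M, hM⟩ := exists_norm_le_of_tiltedEnergy_le j hα hA hF
    (((hD2F_bdd.of_hasFDerivAt hD2F).comp_clm j).of_hasFDerivAt hDF) ρ
  obtain ⟨K, hK⟩ := exists_neg_apply_apply_le hj hk hc hR_low hD2F_bdd (half_pos hα) M
  set c₁ := √(‖VV‖ * ‖j‖ * ‖j‖ + ‖A‖ + 1)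
  have hc₁ : 0 < c₁ := Real.sqrt_pos.2 (by positivity)
  set P := K ^ 2 * (C * ‖k‖ / √γ) / (2 * (α / 2))
  have hP : 0 ≤ P := by positivity
  refine ⟨α / 2 / (2 * c₁), by positivity, P * |M|, by positivity,
    fun δ hδ hδ₁ ℓ z v hρ h t ht => ?_⟩
  have hA₀ := apply_self_nonneg_of_coercive hα.le hA
  have hVV₀ := apply_self_nonneg_of_coercive hγ.le hVV
  have hB₀ : ∀ u, 0 ≤ regForm j A VV δ u u := fun u =>
    (hVV₀ _).trans (apply_self_le_regForm hδ.le hA₀ u)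
  have hR : ∀ x, 0 ≤ R x := fun x => (by positivity : 0 ≤ c * ‖x‖).trans (hR_low x)
  have hbound : ∀ s : ℝ, 0 ≤ s → ‖z s‖ ≤ M ∧
      tiltedEnergy j A F ℓ (z 0) - tiltedEnergy j A F ℓ (z s) ≤ M := fun s hs => hM ℓ (z 0) (z s) hρ
    (h.energy_antitoneOn (hasFDerivAt_tiltedEnergy hA_symm hDF ℓ) (fun _ => hR _)
      (comp_homogeneous hR_hom) hB₀ self_mem_Ici hs hs)
  refine (h.energyNorm_add_mul_integral_le (hasFDerivAt_tiltedEnergy hA_symm hDF ℓ)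
    (hasFDerivAt_tiltedEnergyDeriv hD2F ℓ) (regForm_symm hA_symm hVV_symm) (mul_pos hδ hα)
    (mul_sq_le_regForm hδ.le hA hVV₀) (fun _ => hR _) (comp_homogeneous hR_hom) hP
    (fun s hs => ?_) ht).trans ?_
  · refine le_trans ?_ (neg_mul_sq_add_mul_le (half_pos hα) hc₁ (norm_nonneg (v s)) (hR _)
      (apply_le_mul_energyNorm_regForm hC hR_up hδ.le hA₀ hγ hVV (v s))
      (energyNorm_regForm_le hδ.le hδ₁ (v s)))
    have hHess : tiltedEnergyHessian j A D2F (z s) (v s) (v s) =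
        A (v s) (v s) + D2F (z s) (v s) (j (v s)) := rfl
    linarith [hA (v s), hK (z s) (hbound s hs).1 (v s)]
  · gcongr
    exact (hbound t ht).2.trans (le_abs_self M)

theorem IsRegFlow.eLpNorm_add_eLpNorm_add_lintegral_le {δ κ Q : ℝ} {ℓ : V →L[ℝ] ℝ} {z v : ℝ → Z}
    (h : IsRegFlow j k A VV R DF δ ℓ z v) (hα : 0 < α) (hA : ∀ u, α * ‖u‖ ^ 2 ≤ A u u)
    (hγ : 0 < γ) (hVV : ∀ v, γ * ‖v‖ ^ 2 ≤ VV v v) (hδ : 0 < δ) (hκ : 0 < κ)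
    (hQ : ∀ t ≥ 0, energyNorm (regForm j A VV δ) (v t) + κ * ∫ s in 0..t, ‖v s‖ ≤ Q) :
    eLpNorm (fun t => j (v t)) ⊤ (volume.restrict (Ioi 0)) +
        ENNReal.ofReal √δ * eLpNorm v ⊤ (volume.restrict (Ioi 0)) + ∫⁻ t in Ioi 0, ‖v t‖ₑ ≤
      ENNReal.ofReal ((1 / √γ + 1 / √α + 1 / κ) * Q) := by
  have hA₀ := apply_self_nonneg_of_coercive hα.le hA
  have hVV₀ := apply_self_nonneg_of_coercive hγ.le hVV
  have hint : ∀ t ≥ 0, 0 ≤ κ * ∫ s in 0..t, ‖v s‖ := fun t ht =>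
    mul_nonneg hκ.le (intervalIntegral.integral_nonneg ht fun _ _ => norm_nonneg _)
  have hrate : ∀ t ≥ 0, energyNorm (regForm j A VV δ) (v t) ≤ Q := fun t ht => by
    linarith [hQ t ht, hint t ht]
  have hQ₀ : 0 ≤ Q := (energyNorm_nonneg _ _).trans (hrate 0 le_rfl)
  have hsup_V : ∀ t ∈ Ioi 0, ‖j (v t)‖ ≤ Q / √γ := fun t ht =>
    (le_div_iff₀' (Real.sqrt_pos.2 hγ)).2
      ((sqrt_mul_norm_apply_le_energyNorm_regForm hδ.le hA₀ hγ.le hVV _).trans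
        (hrate t (le_of_lt ht)))
  have hsup_Z : ∀ t ∈ Ioi 0, ‖√δ • v t‖ ≤ Q / √α := fun t ht => by
    rw [norm_smul, Real.norm_of_nonneg (Real.sqrt_nonneg δ), le_div_iff₀' (Real.sqrt_pos.2 hα)]
    exact (sqrt_mul_sqrt_mul_norm_le_energyNorm_regForm hδ.le hα.le hA hVV₀ _).trans
      (hrate t (le_of_lt ht))
  have hint_Z : ∀ t ≥ 0, ∫ s in 0..t, ‖v s‖ ≤ Q / κ := fun t ht =>
    (le_div_iff₀' hκ).2 (by linarith [hQ t ht, energyNorm_nonneg (regForm j A VV δ) (v t)])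
  have hloc : ∀ b, IntegrableOn v (Ioc 0 b) := fun b =>
    ((h.continuousOn_rate.mono Icc_subset_Ici_self).integrableOn_Icc).mono_set Ioc_subset_Icc_self
  calc _ = eLpNorm (fun t => j (v t)) ⊤ (volume.restrict (Ioi 0)) +
        eLpNorm (√δ • v) ⊤ (volume.restrict (Ioi 0)) + ∫⁻ t in Ioi 0, ‖v t‖ₑ := by
        rw [eLpNorm_const_smul, Real.enorm_of_nonneg (Real.sqrt_nonneg δ)]
    _ ≤ ENNReal.ofReal (Q / √γ) + ENNReal.ofReal (Q / √α) + ENNReal.ofReal (Q / κ) := by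
        gcongr
        · exact eLpNorm_top_restrict_le_of_forall_mem_norm_le measurableSet_Ioi hsup_V
        · exact eLpNorm_top_restrict_le_of_forall_mem_norm_le measurableSet_Ioi hsup_Z
        · exact lintegral_enorm_Ioi_le_of_intervalIntegral_norm_le hloc hint_Z
    _ = ENNReal.ofReal ((1 / √γ + 1 / √α + 1 / κ) * Q) := by
        rw [← ENNReal.ofReal_add (by positivity) (by positivity),
          ← ENNReal.ofReal_add (by positivity) (by positivity)]
        congr 1
        ring

end RegularizedFlow

section RegularizedSolution

open Set

variable {Z V X : Type*} [NormedAddCommGroup V] [InnerProductSpace ℝ V]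
  [NormedAddCommGroup X] [NormedSpace ℝ X] {k : V →L[ℝ] X} {VV : V →L[ℝ] V →L[ℝ] ℝ}
  {R : X → ℝ} {DF : Z → V →L[ℝ] ℝ} {δ γ : ℝ} {ℓ : V →L[ℝ] ℝ} {z v : ℝ → Z}
  [NormedAddCommGroup Z]

lemma IsRegFlow.energyNorm_zero_le_distV [NormedSpace ℝ Z] {j : Z →L[ℝ] V}
    {A : Z →L[ℝ] Z →L[ℝ] ℝ} (h : IsRegFlow j k A VV R DF δ ℓ z v) (hA : ∀ u, 0 ≤ A u u)
    (hγ : 0 < γ) (hVV : ∀ v, γ * ‖v‖ ^ 2 ≤ VV v v)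
    (hR_hom : ∀ s : ℝ, 0 ≤ s → ∀ x, R (s • x) = s * R x) (hR : ∀ x, 0 ≤ R x) (hδ : 0 ≤ δ)
    {ξ : V →L[ℝ] ℝ} (hξ : ∀ w, ξ (j w) = A (z 0) w + DF (z 0) (j w)) :
    energyNorm (regForm j A VV δ) (v 0) ≤ distV VV R k (ℓ - ξ) := by
  have hVV₀ := apply_self_le_regForm (j := j) (VV := VV) hδ hA (v 0)
  have hB₀ : 0 ≤ regForm j A VV δ (v 0) (v 0) :=
    (apply_self_nonneg_of_coercive hγ.le hVV _).trans hVV₀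
  refine le_distV_of_add_sq_le hγ hVV hR (v := j (v 0)) (Real.sqrt_le_sqrt hVV₀) (le_of_eq ?_)
  have hflow : R (k (j (v 0))) + regForm j A VV δ (v 0) (v 0)
      + (A (z 0) (v 0) + DF (z 0) (j (v 0)) - ℓ (j (v 0))) = 0 :=
    (h.flowRule 0 le_rfl).eq_zero (comp_homogeneous hR_hom)
  rw [energyNorm, Real.sq_sqrt hB₀, _root_.sub_apply, hξ]
  linarith

lemma IsRegSol.isRegFlow [InnerProductSpace ℝ Z] {j : Z →L[ℝ] V} {A : Z →L[ℝ] Z →L[ℝ] ℝ}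
    {z₀ : Z} (h : IsRegSol j k A VV R DF δ ℓ z₀ z v) (hA : ∀ u w, A u w = A w u)
    (hVV : ∀ u w, VV u w = VV w u) (hR : ConvexOn ℝ univ R) :
    IsRegFlow j k A VV R DF δ ℓ z v := by
  obtain ⟨-, -, ⟨_, hv⟩, hderiv, hincl⟩ := h
  refine ⟨hv.continuousOn, hderiv, fun t ht =>
    flowRule_of_isMinOn (hR.comp_linearMap (k.comp j).toLinearMap) (regForm_symm hA hVV)
      fun w _ => ?_⟩
  have hw := hincl t ht w
  simp only [map_sub] at hw
  simp only [mem_ofPred_eq, regForm_apply, tiltedEnergyDeriv, _root_.sub_apply, _root_.add_apply,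
    ContinuousLinearMap.comp_apply]
  linarith

end RegularizedSolution

theorem stmt8_general {Z V X : Type*} [NormedAddCommGroup Z] [NormedSpace ℝ Z]
    [NormedAddCommGroup V] [InnerProductSpace ℝ V] [NormedAddCommGroup X] [NormedSpace ℝ X]
    {j : Z →L[ℝ] V} (hj : IsCompactOperator j) {k : V →L[ℝ] X} (hk : Function.Injective k)
    {A : Z →L[ℝ] Z →L[ℝ] ℝ} (hA_symm : ∀ u w, A u w = A w u) {α : ℝ} (hα : 0 < α)
    (hA : ∀ u, α * ‖u‖ ^ 2 ≤ A u u) {VV : V →L[ℝ] V →L[ℝ] ℝ} (hVV_symm : ∀ u w, VV u w = VV w u)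
    {γ : ℝ} (hγ : 0 < γ) (hVV : ∀ v, γ * ‖v‖ ^ 2 ≤ VV v v) {R : X → ℝ}
    (hR_hom : ∀ s : ℝ, 0 ≤ s → ∀ x, R (s • x) = s * R x) {c C : ℝ} (hc : 0 < c) (hC : 0 ≤ C)
    (hR_low : ∀ x, c * ‖x‖ ≤ R x) (hR_up : ∀ x, R x ≤ C * ‖x‖) {F : Z → ℝ} (hF : ∀ x, 0 ≤ F x)
    {DF : Z → V →L[ℝ] ℝ} (hDF : ∀ x, HasFDerivAt F ((DF x).comp j) x)
    {D2F : Z → Z →L[ℝ] V →L[ℝ] ℝ} (hD2F : ∀ x, HasFDerivAt DF (D2F x) x)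
    (hD2F_bdd : IsBoundedOnBalls D2F) (ρ : ℝ) :
    ∃ Cρ > 0, ∀ δ, 0 < δ → δ ≤ 1 → ∀ (ℓ ξ : V →L[ℝ] ℝ) (z v : ℝ → Z),
      (∀ w, ξ (j w) = A (z 0) w + DF (z 0) (j w)) → ‖z 0‖ + ‖ℓ‖ ≤ ρ →
      IsRegFlow j k A VV R DF δ ℓ z v →
      eLpNorm (fun t => j (v t)) ⊤ (volume.restrict (Set.Ioi 0)) +
          ENNReal.ofReal √δ * eLpNorm v ⊤ (volume.restrict (Set.Ioi 0)) +
          ∫⁻ t in Set.Ioi 0, ‖v t‖ₑ ≤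
        ENNReal.ofReal (Cρ * (1 + distV VV R k (ℓ - ξ))) := by
  obtain ⟨κ, hκ, Q, hQ, hest⟩ := exists_energyNorm_add_mul_integral_le hj hk hA_symm hα hA
    hVV_symm hγ hVV hR_hom hc hC hR_low hR_up hF hDF hD2F hD2F_bdd ρ
  refine ⟨(1 / √γ + 1 / √α + 1 / κ) * (1 + Q), by positivity,
    fun δ hδ hδ₁ ℓ ξ z v hξ hρ h => ?_⟩
  have hinit : energyNorm (regForm j A VV δ) (v 0) ≤ distV VV R k (ℓ - ξ) :=
    h.energyNorm_zero_le_distV (apply_self_nonneg_of_coercive hα.le hA) hγ hVV hR_hom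
      (fun x => (by positivity : 0 ≤ c * ‖x‖).trans (hR_low x)) hδ.le hξ
  refine (h.eLpNorm_add_eLpNorm_add_lintegral_le hα hA hγ hVV hδ hκ
    (hest δ hδ hδ₁ ℓ z v hρ h)).trans (ENNReal.ofReal_le_ofReal ?_)
  rw [mul_assoc]
  gcongr
  nlinarith [distV_nonneg VV R k (ℓ - ξ)]

/-- A priori estimates for the `δ`-regularized solutions, uniform
in `δ` (Proposition `prop.regestregularizedRplus` of the paper): for every
`ρ > 0` there is `C(ρ) > 0` such that for all `δ ∈ (0,1]`, all data
`(z₀, ℓ*)` with `DI(z₀) ∈ V*` and `‖z₀‖_Z + ‖ℓ*‖_{V*} ≤ ρ`, the solution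
`z_δ` satisfies
`ess sup ‖ż_δ‖_V + √δ · ess sup ‖ż_δ‖_Z + ∫₀^∞ ‖ż_δ‖_Z
  ≤ C(ρ)(1 + dist_𝕍(−DI(z₀) + ℓ*, ∂R(0)))`. -/
theorem stmt8
    {Z V X : Type*}
    [NormedAddCommGroup Z] [InnerProductSpace ℝ Z] [CompleteSpace Z]
    [TopologicalSpace.SeparableSpace Z]
    [NormedAddCommGroup V] [InnerProductSpace ℝ V] [CompleteSpace V]
    [TopologicalSpace.SeparableSpace V]
    [NormedAddCommGroup X] [NormedSpace ℝ X]
    (jZV : Z →L[ℝ] V) (hjZV_inj : Function.Injective jZV)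
    (hjZV_cpt : IsCompactOperator jZV)
    (jVX : V →L[ℝ] X) (hjVX_inj : Function.Injective jVX)
    (A : Z →L[ℝ] Z →L[ℝ] ℝ) (hA_symm : ∀ z w : Z, A z w = A w z)
    (α : ℝ) (hα : 0 < α) (hA_ell : ∀ z : Z, α * ‖z‖ ^ 2 ≤ A z z)
    (VV : V →L[ℝ] V →L[ℝ] ℝ) (hVV_symm : ∀ u v : V, VV u v = VV v u)
    (γ : ℝ) (hγ : 0 < γ) (hVV_ell : ∀ v : V, γ * ‖v‖ ^ 2 ≤ VV v v)
    (R : X → ℝ) (hR_conv : ConvexOn ℝ Set.univ R) (hR_cont : Continuous R)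
    (hR_hom : ∀ t : ℝ, 0 ≤ t → ∀ x : X, R (t • x) = t * R x)
    (c C : ℝ) (hc : 0 < c) (hC : 0 < C)
    (hR_low : ∀ x : X, c * ‖x‖ ≤ R x) (hR_up : ∀ x : X, R x ≤ C * ‖x‖)
    (F : Z → ℝ) (hF_nonneg : ∀ z : Z, 0 ≤ F z)
    (DF : Z → V →L[ℝ] ℝ)
    (hDF : ∀ z : Z, HasFDerivAt F ((DF z).comp jZV) z)
    (D2F : Z → Z →L[ℝ] V →L[ℝ] ℝ)
    (hD2F : ∀ z : Z, HasFDerivAt DF (D2F z) z)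
    (hD2F_cont : Continuous D2F)
    (C₀ q : ℝ) (hC₀ : 0 < C₀) (hq : 1 ≤ q)
    (hD2F_bound : ∀ z v : Z, ‖D2F z v‖ ≤ C₀ * (1 + ‖z‖ ^ q) * ‖v‖) :
    ∀ ρ > (0:ℝ), ∃ Cρ > (0:ℝ), ∀ δ : ℝ, 0 < δ → δ ≤ 1 →
      ∀ (lstar : V →L[ℝ] ℝ) (z₀ : Z) (ξ₀ : V →L[ℝ] ℝ),
      -- DI(z₀) ∈ V*: ξ₀ is the V*-extension of DI(z₀) = A z₀ + DF z₀
      (∀ w : Z, ξ₀ (jZV w) = A z₀ w + DF z₀ (jZV w)) →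
      ‖z₀‖ + ‖lstar‖ ≤ ρ →
      ∀ (z zd : ℝ → Z),
        IsRegSol jZV jVX A VV R DF δ lstar z₀ z zd →
        eLpNorm (fun t => jZV (zd t)) ⊤ (volume.restrict (Set.Ioi 0)) +
          ENNReal.ofReal (Real.sqrt δ) *
            eLpNorm zd ⊤ (volume.restrict (Set.Ioi 0)) +
          (∫⁻ t in Set.Ioi (0:ℝ), (‖zd t‖₊ : ENNReal)) ≤
        ENNReal.ofReal (Cρ * (1 + distV VV R jVX (lstar - ξ₀))) := by
  intro ρ _
  obtain ⟨Cρ, hCρ, hest⟩ := stmt8_general hjZV_cpt hjVX_inj hA_symm hα hA_ell hVV_symm hγ hVV_ell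
    hR_hom hc hC.le hR_low hR_up hF_nonneg hDF hD2F
    (IsBoundedOnBalls.of_norm_apply_le_rpow hC₀.le (zero_le_one.trans hq) hD2F_bound) ρ
  refine ⟨Cρ, hCρ, fun δ hδ hδ₁ lstar z₀ ξ₀ hξ₀ hρ z zd h => ?_⟩
  have hz₀ : z 0 = z₀ := h.1
  exact hest δ hδ hδ₁ lstar ξ₀ z zd (hz₀ ▸ hξ₀) (hz₀ ▸ hρ) (h.isRegFlow hA_symm hVV_symm hR_conv)
end

section
/- (Lower semicontinuity of products under weak L¹ convergence.) Let I ⊂ ℝ be a bounded interval and let f, fₙ : I → [0,∞) be measurable with liminf_{n→∞} fₙ(s) ≥ f(s) for almost all s ∈ I, and let g, gₙ ∈ L¹(I) be nonnegative with gₙ ⇀ g weakly in L¹(I), i.e. ∫_I gₙ(s)φ(s) ds → ∫_I g(s)φ(s) ds for every φ ∈ L^∞(I). Then liminf_{n→∞} ∫_I fₙ(s) gₙ(s) ds ≥ ∫_I f(s) g(s) ds (with both sides valued in [0,∞]). -/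
open MeasureTheory Filter

/-!
The truncated tail infima `ψₖ = min (inf_{n ≥ k} fₙ) k` are bounded, hence admissible test
functions, and increase to `liminf fₙ`. For fixed `k`, weak convergence and `ψₖ ≤ fₙ` for `n ≥ k`
give `∫ ψₖ g = lim ∫ ψₖ gₙ ≤ liminf ∫ fₙ gₙ`; monotone convergence in `k` then replaces `ψₖ` by
`liminf fₙ ≥ f`.
-/

open scoped ENNReal NNReal

/-- The infimum of the tail `u k, u (k + 1), …` of a sequence, cut off at height `k`. These bounded
minorants increase to `liminf u`; the cutoff uses the index `k` itself, so that a single monotone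
limit removes both the tail and the truncation. -/
noncomputable def truncatedTailInf (u : ℕ → ℝ≥0∞) (k : ℕ) : ℝ≥0∞ :=
  (⨅ n ≥ k, u n) ⊓ k

namespace truncatedTailInf

theorem le_natCast (u : ℕ → ℝ≥0∞) (k : ℕ) : truncatedTailInf u k ≤ k :=
  inf_le_right

theorem le_of_le (u : ℕ → ℝ≥0∞) {k n : ℕ} (hkn : k ≤ n) : truncatedTailInf u k ≤ u n :=
  inf_le_left.trans (iInf₂_le n hkn)

theorem monotone_iInf_tail (u : ℕ → ℝ≥0∞) : Monotone fun k ↦ ⨅ n ≥ k, u n :=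
  fun _ _ hjk ↦ biInf_mono fun _ hn ↦ hjk.trans hn

protected theorem monotone (u : ℕ → ℝ≥0∞) : Monotone (truncatedTailInf u) :=
  (monotone_iInf_tail u).inf Nat.mono_cast

theorem iSup_eq_liminf (u : ℕ → ℝ≥0∞) : ⨆ k, truncatedTailInf u k = liminf u atTop := by
  simp only [truncatedTailInf, iSup_inf_of_monotone (monotone_iInf_tail u) Nat.mono_cast,
    ENNReal.iSup_natCast, inf_top_eq, liminf_eq_iSup_iInf_of_nat]

protected theorem measurable {α : Type*} [MeasurableSpace α] {f : ℕ → α → ℝ≥0∞}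
    (hf : ∀ n, Measurable (f n)) (k : ℕ) :
    Measurable fun s ↦ truncatedTailInf (fun n ↦ f n s) k :=
  (Measurable.iInf fun n ↦ .iInf fun _ ↦ hf n).inf measurable_const

end truncatedTailInf

theorem ofReal_liminf_le_liminf_ofReal {ι : Type*} {l : Filter ι} {u : ι → ℝ}
    (hu : l.IsBoundedUnder (· ≥ ·) u) :
    ENNReal.ofReal (liminf u l) ≤ liminf (fun i ↦ ENNReal.ofReal (u i)) l := by
  refine le_of_forall_lt_imp_le_of_dense fun c hc ↦ le_liminf_of_le (by isBoundedDefault) ?_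
  have hc_top : c ≠ ∞ := hc.ne_top
  filter_upwards [eventually_lt_of_lt_liminf ((ENNReal.lt_ofReal_iff_toReal_lt hc_top).1 hc) hu]
    with i hi
  exact ((ENNReal.lt_ofReal_iff_toReal_lt hc_top).2 hi).le

section LowerSemicontinuity

variable {α : Type*} [MeasurableSpace α] {μ : Measure α}

theorem lintegral_mul_le_liminf_lintegral_mul {f g : α → ℝ≥0∞} {fn gn : ℕ → α → ℝ≥0∞}
    (hfn : ∀ n, Measurable (fn n)) (hg : AEMeasurable g μ)
    (hf : ∀ᵐ s ∂μ, f s ≤ liminf (fun n ↦ fn n s) atTop)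
    (hweak : ∀ φ : α → ℝ≥0∞, Measurable φ → (∃ C : ℝ≥0, ∀ s, φ s ≤ C) →
      ∫⁻ s, φ s * g s ∂μ ≤ liminf (fun n ↦ ∫⁻ s, φ s * gn n s ∂μ) atTop) :
    ∫⁻ s, f s * g s ∂μ ≤ liminf (fun n ↦ ∫⁻ s, fn n s * gn n s ∂μ) atTop := by
  let ψ (k : ℕ) (s : α) : ℝ≥0∞ := truncatedTailInf (fun n ↦ fn n s) k
  have hψ_meas (k : ℕ) : Measurable (ψ k) := truncatedTailInf.measurable hfn k
  have hψ_lintegral (k : ℕ) :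
      ∫⁻ s, ψ k s * g s ∂μ ≤ liminf (fun n ↦ ∫⁻ s, fn n s * gn n s ∂μ) atTop := by
    refine (hweak (ψ k) (hψ_meas k) ⟨k, fun s ↦ truncatedTailInf.le_natCast _ k⟩).trans
      (liminf_le_liminf ?_)
    filter_upwards [eventually_ge_atTop k] with n hkn
    gcongr with s
    exact truncatedTailInf.le_of_le _ hkn
  calc ∫⁻ s, f s * g s ∂μ
      ≤ ∫⁻ s, liminf (fun n ↦ fn n s) atTop * g s ∂μ :=
        lintegral_mono_ae <| hf.mono fun s hs ↦ by gcongr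
    _ = ∫⁻ s, ⨆ k, ψ k s * g s ∂μ := by
        simp only [ψ, ← truncatedTailInf.iSup_eq_liminf, ENNReal.iSup_mul]
    _ = ⨆ k, ∫⁻ s, ψ k s * g s ∂μ :=
        lintegral_iSup' (fun k ↦ (hψ_meas k).aemeasurable.mul hg) <| .of_forall fun s _ _ hjk ↦
          mul_le_mul_left (truncatedTailInf.monotone _ hjk) _
    _ ≤ liminf (fun n ↦ ∫⁻ s, fn n s * gn n s ∂μ) atTop := iSup_le hψ_lintegral

theorem lintegral_mul_ofReal_eq_ofReal_integral {φ : α → ℝ≥0∞} {C : ℝ≥0} {g : α → ℝ}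
    (hφ : AEMeasurable φ μ) (hφC : ∀ᵐ s ∂μ, φ s ≤ C) (hg : Integrable g μ) (hg_nonneg : 0 ≤ᵐ[μ] g) :
    ∫⁻ s, φ s * ENNReal.ofReal (g s) ∂μ = ENNReal.ofReal (∫ s, g s * (φ s).toReal ∂μ) := by
  have h_int : Integrable (fun s ↦ g s * (φ s).toReal) μ := by
    refine hg.mul_bdd (c := C) hφ.ennreal_toReal.aestronglyMeasurable ?_
    filter_upwards [hφC] with s hs
    simpa only [Real.norm_of_nonneg ENNReal.toReal_nonneg] using
      ENNReal.toReal_le_coe_of_le_coe hs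
  have h_nonneg : 0 ≤ᵐ[μ] fun s ↦ g s * (φ s).toReal :=
    hg_nonneg.mono fun s hs ↦ mul_nonneg hs ENNReal.toReal_nonneg
  rw [ofReal_integral_eq_lintegral_ofReal h_int h_nonneg]
  refine lintegral_congr_ae ?_
  filter_upwards [hφC, hg_nonneg] with s hs hgs
  rw [ENNReal.ofReal_mul hgs, ENNReal.ofReal_toReal (ne_top_of_le_ne_top ENNReal.coe_ne_top hs),
    mul_comm]

theorem stmt14_general {f : α → ℝ≥0∞} {fn : ℕ → α → ℝ≥0∞} {g : α → ℝ} {gn : ℕ → α → ℝ}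
    (hfn_meas : ∀ n, Measurable (fn n))
    (hliminf : ∀ᵐ s ∂μ, f s ≤ liminf (fun n ↦ fn n s) atTop)
    (hg_nonneg : 0 ≤ᵐ[μ] g) (hgn_nonneg : ∀ n, 0 ≤ᵐ[μ] gn n)
    (hg_int : Integrable g μ) (hgn_int : ∀ n, Integrable (gn n) μ)
    (hweak : ∀ φ : α → ℝ, Measurable φ → (∃ C : ℝ, ∀ s, |φ s| ≤ C) →
      Tendsto (fun n ↦ ∫ s, gn n s * φ s ∂μ) atTop (nhds (∫ s, g s * φ s ∂μ))) :
    ∫⁻ s, f s * ENNReal.ofReal (g s) ∂μ ≤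
      liminf (fun n ↦ ∫⁻ s, fn n s * ENNReal.ofReal (gn n s) ∂μ) atTop := by
  refine lintegral_mul_le_liminf_lintegral_mul hfn_meas hg_int.aemeasurable.ennreal_ofReal hliminf
    fun φ hφ ⟨C, hφC⟩ ↦ ?_
  have hφ_abs (s : α) : |(φ s).toReal| ≤ C := by
    simpa only [abs_of_nonneg ENNReal.toReal_nonneg] using
      ENNReal.toReal_le_coe_of_le_coe (hφC s)
  have h_lintegral {u : α → ℝ} (hu : Integrable u μ) (hu_nonneg : 0 ≤ᵐ[μ] u) :=
    lintegral_mul_ofReal_eq_ofReal_integral hφ.aemeasurable (.of_forall hφC) hu hu_nonneg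
  simp only [h_lintegral hg_int hg_nonneg, h_lintegral (hgn_int _) (hgn_nonneg _)]
  exact (ENNReal.tendsto_ofReal (hweak _ hφ.ennreal_toReal ⟨C, hφ_abs⟩)).liminf_eq.ge

end LowerSemicontinuity

/-- Lower semicontinuity of products under weak `L¹`
convergence (Lemma `app_prop:lsc2`, cited from [MRS12, Lemma 4.3]): on a
bounded interval `I`, if `fₙ, f ≥ 0` are measurable with `liminf fₙ ≥ f`
a.e., and `gₙ, g ≥ 0` are integrable with `gₙ ⇀ g` weakly in `L¹(I)`, then
`liminf ∫_I fₙ gₙ ≥ ∫_I f g`, both sides valued in `[0,∞]`. -/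
theorem stmt14
    (I : Set ℝ) (hI_meas : MeasurableSet I)
    (hI_bdd : Bornology.IsBounded I) (hI_conn : I.OrdConnected)
    (f : ℝ → ℝ) (fn : ℕ → ℝ → ℝ)
    (hf_meas : Measurable f) (hfn_meas : ∀ n, Measurable (fn n))
    (hf_nonneg : ∀ s, 0 ≤ f s) (hfn_nonneg : ∀ n s, 0 ≤ fn n s)
    (hliminf : ∀ᵐ s : ℝ ∂volume, s ∈ I → f s ≤ liminf (fun n => fn n s) atTop)
    (g : ℝ → ℝ) (gn : ℕ → ℝ → ℝ)
    (hg_nonneg : ∀ s, 0 ≤ g s) (hgn_nonneg : ∀ n s, 0 ≤ gn n s)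
    (hg_int : IntegrableOn g I volume)
    (hgn_int : ∀ n, IntegrableOn (gn n) I volume)
    -- gₙ ⇀ g weakly in L¹(I): testing against bounded measurable φ
    (hweak : ∀ φ : ℝ → ℝ, Measurable φ → (∃ Cφ : ℝ, ∀ s, |φ s| ≤ Cφ) →
      Tendsto (fun n => ∫ s in I, gn n s * φ s) atTop
        (nhds (∫ s in I, g s * φ s))) :
    (∫⁻ s in I, ENNReal.ofReal (f s * g s)) ≤
      liminf (fun n => ∫⁻ s in I, ENNReal.ofReal (fn n s * gn n s)) atTop := by
  have hliminf_ofReal : ∀ᵐ s ∂volume.restrict I,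
      ENNReal.ofReal (f s) ≤ liminf (fun n ↦ ENNReal.ofReal (fn n s)) atTop :=
    ((ae_restrict_iff' hI_meas).2 hliminf).mono fun s hs ↦ (ENNReal.ofReal_le_ofReal hs).trans <|
      ofReal_liminf_le_liminf_ofReal (isBoundedUnder_of ⟨0, fun n ↦ hfn_nonneg n s⟩)
  simpa only [ENNReal.ofReal_mul (hf_nonneg _), ENNReal.ofReal_mul (hfn_nonneg _ _)] using
    stmt14_general (fun n ↦ (hfn_meas n).ennreal_ofReal) hliminf_ofReal
      (.of_forall hg_nonneg) (fun n ↦ .of_forall (hgn_nonneg n)) hg_int hgn_int hweak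
end

section
/- (Lower semicontinuity of the regularized conjugates.) Under the stated assumptions on Z, V, X, A, 𝕍 and R, for δ > 0 define R_δ : Z → [0,∞) by R_δ(v) := R(v) + ½⟨𝕍v,v⟩ + (δ/2)⟨Av,v⟩, and for η ∈ Z* define the conjugates R_δ*(η) := sup_{v∈Z} (⟨η,v⟩ − R_δ(v)) ∈ [0,∞) and R_𝕍*(η) := sup_{v∈Z} (⟨η,v⟩ − R(v) − ½⟨𝕍v,v⟩) ∈ [0,∞]. If (δₙ) ⊂ (0,∞) with δₙ ↓ 0 and (ηₙ) ⊂ Z* with ηₙ ⇀ η weakly in Z*, then liminf_{n→∞} R_{δₙ}*(ηₙ) ≥ R_𝕍*(η). -/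
open Filter

open scoped ENNReal Topology

/-- The Fenchel conjugate `F*(ξ) = sup_v (ξ(v) - F(v))`, as a function of both `F` and `ξ`. It is
truncated below at `0` so as to take values in `[0,∞]`; for linear `ξ` and `F 0 = 0` this changes
nothing. The dual variable `ξ` is recorded by its values only, so that weak convergence in a dual
space becomes convergence in `Z → ℝ`. -/
noncomputable def convexConjugate {Z : Type*} (F ξ : Z → ℝ) : ℝ≥0∞ :=
  ⨆ v, ENNReal.ofReal (ξ v - F v)

theorem lowerSemicontinuous_convexConjugate {Z : Type*} :
    LowerSemicontinuous fun p : (Z → ℝ) × (Z → ℝ) => convexConjugate p.1 p.2 :=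
  lowerSemicontinuous_iSup fun v =>
    have h_cont : Continuous fun p : (Z → ℝ) × (Z → ℝ) => p.2 v - p.1 v := by fun_prop
    (ENNReal.continuous_ofReal.comp h_cont).lowerSemicontinuous

theorem convexConjugate_le_liminf {Z ι : Type*} {l : Filter ι} {F : ι → Z → ℝ} {F₀ : Z → ℝ}
    {ξ : ι → Z → ℝ} {ξ₀ : Z → ℝ} (hF : Tendsto F l (𝓝 F₀)) (hξ : Tendsto ξ l (𝓝 ξ₀)) :
    convexConjugate F₀ ξ₀ ≤ liminf (fun i => convexConjugate (F i) (ξ i)) l :=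
  (lowerSemicontinuous_convexConjugate.le_liminf (F₀, ξ₀)).trans
    (hF.prodMk_nhds hξ).liminf_le_liminf_comp

theorem tendsto_add_mul_of_tendsto_zero {Z ι : Type*} {l : Filter ι} (Ψ Φ : Z → ℝ) {ε : ι → ℝ}
    (hε : Tendsto ε l (𝓝 0)) : Tendsto (fun i v => Ψ v + ε i * Φ v) l (𝓝 Ψ) :=
  tendsto_pi_nhds.2 fun v => by simpa using (hε.mul_const (Φ v)).const_add (Ψ v)

theorem stmt15_general {Z ι : Type*} {l : Filter ι} (Ψ Φ : Z → ℝ) {δ : ι → ℝ}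
    (hδ : Tendsto δ l (𝓝 0)) {η : ι → Z → ℝ} {η₀ : Z → ℝ}
    (hη : ∀ v, Tendsto (fun i => η i v) l (𝓝 (η₀ v))) :
    convexConjugate Ψ η₀ ≤
      liminf (fun i => convexConjugate (fun v => Ψ v + δ i / 2 * Φ v) (η i)) l :=
  have hδ_half : Tendsto (fun i => δ i / 2) l (𝓝 0) := by simpa using hδ.div_const 2
  convexConjugate_le_liminf (tendsto_add_mul_of_tendsto_zero Ψ Φ hδ_half) (tendsto_pi_nhds.2 hη)

/-- Lower semicontinuity of the regularized conjugates (Lemma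
`app_prop:lsc3` of the paper): with
`R_δ(v) = R(v) + ½⟨𝕍v,v⟩ + (δ/2)⟨Av,v⟩` and the convex conjugates
`R_δ*(η) = sup_v (⟨η,v⟩ − R_δ(v))`, `R_𝕍*(η) = sup_v (⟨η,v⟩ − R(v) − ½⟨𝕍v,v⟩)`
(valued in `[0,∞]`), if `δₙ ↓ 0` and `ηₙ ⇀ η` weakly in `Z*`, then
`liminf R_{δₙ}*(ηₙ) ≥ R_𝕍*(η)`. -/
theorem stmt15
    {Z V X : Type*}
    [NormedAddCommGroup Z] [InnerProductSpace ℝ Z] [CompleteSpace Z]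
    [TopologicalSpace.SeparableSpace Z]
    [NormedAddCommGroup V] [InnerProductSpace ℝ V] [CompleteSpace V]
    [TopologicalSpace.SeparableSpace V]
    [NormedAddCommGroup X] [NormedSpace ℝ X]
    (jZV : Z →L[ℝ] V) (hjZV_inj : Function.Injective jZV)
    (hjZV_cpt : IsCompactOperator jZV)
    (jVX : V →L[ℝ] X) (hjVX_inj : Function.Injective jVX)
    (A : Z →L[ℝ] Z →L[ℝ] ℝ) (hA_symm : ∀ z w : Z, A z w = A w z)
    (α : ℝ) (hα : 0 < α) (hA_ell : ∀ z : Z, α * ‖z‖ ^ 2 ≤ A z z)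
    (VV : V →L[ℝ] V →L[ℝ] ℝ) (hVV_symm : ∀ u v : V, VV u v = VV v u)
    (γ : ℝ) (hγ : 0 < γ) (hVV_ell : ∀ v : V, γ * ‖v‖ ^ 2 ≤ VV v v)
    (R : X → ℝ) (hR_conv : ConvexOn ℝ Set.univ R) (hR_cont : Continuous R)
    (hR_hom : ∀ t : ℝ, 0 ≤ t → ∀ x : X, R (t • x) = t * R x)
    (c C : ℝ) (hc : 0 < c) (hC : 0 < C)
    (hR_low : ∀ x : X, c * ‖x‖ ≤ R x) (hR_up : ∀ x : X, R x ≤ C * ‖x‖)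
    (δn : ℕ → ℝ) (hδn_pos : ∀ n, 0 < δn n) (hδn_anti : Antitone δn)
    (hδn_lim : Tendsto δn atTop (nhds 0))
    (ηn : ℕ → Z →L[ℝ] ℝ) (η : Z →L[ℝ] ℝ)
    (hηweak : ∀ z : Z, Tendsto (fun n => ηn n z) atTop (nhds (η z))) :
    (⨆ v : Z, ENNReal.ofReal (η v -
        (R (jVX (jZV v)) + 1 / 2 * VV (jZV v) (jZV v)))) ≤
      liminf (fun n => ⨆ v : Z, ENNReal.ofReal (ηn n v -
        (R (jVX (jZV v)) + 1 / 2 * VV (jZV v) (jZV v)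
          + δn n / 2 * A v v))) atTop := by
  exact stmt15_general (fun v => R (jVX (jZV v)) + 1 / 2 * VV (jZV v) (jZV v))
    (fun v => A v v) hδn_lim hηweak
end

section
/- (Integrated chain rule for the energy.) Under the stated assumptions on Z, V, X, A, R and F, let T > 0 and let z : [0,T] → Z be such that sup_{t∈[0,T]} ‖z(t)‖_Z < ∞, z is absolutely continuous as a map into V with a.e. derivative ż ∈ L¹((0,T);V) (i.e. z(t) = z(0) + ∫₀ᵗ ż(r) dr in V), for every t ∈ [0,T] the functional DI(z(t)) ∈ Z* extends to an element ξ(t) ∈ V* with ess sup_{t} ‖ξ(t)‖_{V*} < ∞, and the map t ↦ I(z(t)) is continuous on [0,T]. Then for all 0 ≤ t₁ ≤ t₂ ≤ T, I(z(t₂)) − I(z(t₁)) = ∫_{t₁}^{t₂} ⟨ξ(r), ż(r)⟩_{V*,V} dr. -/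
open MeasureTheory

/-!
Expanding the quadratic part and using ellipticity to absorb the Taylor remainder of `F` (Young's
inequality), the energy satisfies
`⟨ξ(s), z(t) - z(s)⟩ - C ‖z(t) - z(s)‖_V² ≤ I(z(t)) - I(z(s))` for all times `s`, `t`.
Exchanging `s` and `t`, with `ξ` essentially bounded, this gives
`|I(z(t)) - I(z(s))| ≤ L ‖z(t) - z(s)‖_V`: first for almost every time, then for all of them because
`t ↦ I(z(t))` is continuous. Hence the energy is absolutely continuous in time. Where both the
energy and `z` are differentiable, `s ↦ I(z(s)) - ⟨ξ(t), z(s)⟩ + C ‖z(s) - z(t)‖_V²` has a minimum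
at `t`, so the derivative of the energy is `⟨ξ(t), ż(t)⟩`.
-/

section

open Asymptotics Filter NNReal Set Topology

theorem lipschitzOnWith_closedBall_of_norm_hasFDerivAt_apply_le {E G : Type*}
    [NormedAddCommGroup E] [NormedSpace ℝ E] [NormedAddCommGroup G] [NormedSpace ℝ G]
    {f : E → G} {f' : E → E →L[ℝ] G} {C q : ℝ} (hC : 0 ≤ C) (hq : 0 ≤ q)
    (hf : ∀ x, HasFDerivAt f (f' x) x) (hf' : ∀ x v, ‖f' x v‖ ≤ C * (1 + ‖x‖ ^ q) * ‖v‖) (M : ℝ) :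
    LipschitzOnWith (C * (1 + M ^ q)).toNNReal f (Metric.closedBall 0 M) := by
  refine (convex_closedBall 0 M).lipschitzOnWith_of_nnnorm_hasFDerivWithin_le
    (fun x _ => (hf x).hasFDerivWithinAt) fun x hx => ?_
  have hxM : ‖x‖ ^ q ≤ M ^ q :=
    Real.rpow_le_rpow (norm_nonneg x) (mem_closedBall_zero_iff.1 hx) hq
  refine ContinuousLinearMap.opNorm_le_bound _ (NNReal.coe_nonneg _) fun v => ?_
  calc ‖f' x v‖ ≤ C * (1 + ‖x‖ ^ q) * ‖v‖ := hf' x v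
    _ ≤ C * (1 + M ^ q) * ‖v‖ := by gcongr
    _ ≤ (C * (1 + M ^ q)).toNNReal * ‖v‖ := by gcongr; exact Real.le_coe_toNNReal _

theorem le_on_Icc_of_ae_le_on_Ioc {f g : ℝ → ℝ} {a b : ℝ} (hab : a < b)
    (hf : ContinuousOn f (Icc a b)) (hg : ContinuousOn g (Icc a b))
    (hfg : ∀ᵐ t, t ∈ Ioc a b → f t ≤ g t) : ∀ t ∈ Icc a b, f t ≤ g t := by
  have hmin : (fun t => min (f t) (g t)) =ᵐ[volume.restrict (Icc a b)] f := by
    rw [← restrict_Ioc_eq_restrict_Icc]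
    exact (ae_restrict_iff' measurableSet_Ioc).2
      (hfg.mono fun t h ht => min_eq_left (h ht))
  exact fun t ht => min_eq_left_iff.1
    (Measure.eqOn_Icc_of_ae_eq volume hab.ne hmin (hf.inf hg) hf ht)

section AbsolutelyContinuous

variable {a b : ℝ}

theorem absolutelyContinuousOnInterval_of_dist_le_mul {X Y : Type*} [PseudoMetricSpace X]
    [PseudoMetricSpace Y] {f : ℝ → X} {g : ℝ → Y} {L : ℝ}
    (hf : AbsolutelyContinuousOnInterval f a b)
    (hfg : ∀ s ∈ uIcc a b, ∀ t ∈ uIcc a b, dist (g s) (g t) ≤ L * dist (f s) (f t)) :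
    AbsolutelyContinuousOnInterval g a b := by
  have hL : Tendsto (fun E : ℕ × (ℕ → ℝ × ℝ) =>
      L * ∑ i ∈ Finset.range E.1, dist (f (E.2 i).1) (f (E.2 i).2))
      (AbsolutelyContinuousOnInterval.totalLengthFilter ⊓
        𝓟 (AbsolutelyContinuousOnInterval.disjWithin a b)) (𝓝 0) := by
    simpa only [mul_zero] using Tendsto.const_mul L hf
  refine squeeze_zero' (.of_forall fun E => Finset.sum_nonneg fun _ _ => dist_nonneg) ?_ hL
  filter_upwards [mem_inf_of_right (mem_principal_self _)] with E hE
  rw [Finset.mul_sum]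
  exact Finset.sum_le_sum fun i hi => hfg _ (hE.1 i hi).1 _ (hE.1 i hi).2

variable {V : Type*} [NormedAddCommGroup V] [NormedSpace ℝ V] {y y' : ℝ → V}

theorem absolutelyContinuousOnInterval_of_eq_add_integral (hab : a ≤ b)
    (hy' : IntegrableOn y' (Ioc a b)) (hy : ∀ t ∈ Icc a b, y t = y a + ∫ r in Ioc a t, y' r) :
    AbsolutelyContinuousOnInterval y a b := by
  have hint : ∀ t ∈ Icc a b, IntervalIntegrable y' volume a t := fun t ht =>
    (intervalIntegrable_iff_integrableOn_Ioc_of_le ht.1).2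
      (hy'.mono_set (Ioc_subset_Ioc_right ht.2))
  refine absolutelyContinuousOnInterval_of_dist_le_mul (L := 1)
    ((hint b (right_mem_Icc.2 hab)).norm.absolutelyContinuousOnInterval_intervalIntegral
      left_mem_uIcc) ?_
  rw [uIcc_of_le hab]
  intro s hs t ht
  rw [one_mul, dist_comm, dist_comm (∫ r in a..s, ‖y' r‖), dist_eq_norm, Real.dist_eq, hy s hs,
    hy t ht, add_sub_add_left_eq_sub, ← intervalIntegral.integral_of_le hs.1,
    ← intervalIntegral.integral_of_le ht.1,
    intervalIntegral.integral_interval_sub_left (hint t ht) (hint s hs),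
    intervalIntegral.integral_interval_sub_left (hint t ht).norm (hint s hs).norm]
  exact intervalIntegral.norm_integral_le_abs_integral_norm

theorem ae_hasDerivAt_of_eq_add_integral [CompleteSpace V] (hy' : IntegrableOn y' (Ioc a b))
    (hy : ∀ t ∈ Icc a b, y t = y a + ∫ r in Ioc a t, y' r) :
    ∀ᵐ t, t ∈ Ioo a b → HasDerivAt y (y' t) t := by
  rcases le_or_gt b a with hba | hab
  · simp [Ioo_eq_empty_of_le hba]
  filter_upwards [((intervalIntegrable_iff_integrableOn_Ioc_of_le hab.le).2
    hy').ae_hasDerivAt_integral] with t hderiv ht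
  have htI : t ∈ uIcc a b := Icc_subset_uIcc (Ioo_subset_Icc_self ht)
  refine ((hderiv htI a left_mem_uIcc).const_add (y a)).congr_of_eventuallyEq ?_
  filter_upwards [Ioo_mem_nhds ht.1 ht.2] with s hs
  rw [hy s (Ioo_subset_Icc_self hs), intervalIntegral.integral_of_le hs.1.le]

end AbsolutelyContinuous

section QuadraticSubgradient

variable {V : Type*} [NormedAddCommGroup V] [NormedSpace ℝ V]

/-- `ξ` is a family of subgradients of `φ` along the curve `y`, over the parameter set `S`, up to a
quadratic error with constant `C`. It plays the role of semiconvexity of the energy on `V`; it is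
stated along a curve because the energy is only defined on a subspace of `V`. -/
def HasQuadraticSubgradientOn (φ : ℝ → ℝ) (y : ℝ → V) (ξ : ℝ → V →L[ℝ] ℝ) (C : ℝ) (S : Set ℝ) :
    Prop :=
  ∀ s ∈ S, ∀ t ∈ S, ξ s (y t - y s) - C * ‖y t - y s‖ ^ 2 ≤ φ t - φ s

variable {φ : ℝ → ℝ} {y y' : ℝ → V} {ξ : ℝ → V →L[ℝ] ℝ} {a b C K : ℝ}

theorem HasQuadraticSubgradientOn.mono {S S' : Set ℝ} (h : HasQuadraticSubgradientOn φ y ξ C S)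
    (hS : S' ⊆ S) : HasQuadraticSubgradientOn φ y ξ C S' :=
  fun s hs t ht => h s (hS hs) t (hS ht)

theorem HasQuadraticSubgradientOn.sub_le_mul_norm_sub {S : Set ℝ} {s t B : ℝ}
    (h : HasQuadraticSubgradientOn φ y ξ C S) (hs : s ∈ S) (ht : t ∈ S) (hK : ‖ξ s‖ ≤ K)
    (hB : ‖y t - y s‖ ≤ B) : φ s - φ t ≤ (K + |C| * B) * ‖y t - y s‖ := by
  have hlin : -ξ s (y t - y s) ≤ K * ‖y t - y s‖ :=
    (neg_le_abs _).trans ((ξ s).le_of_opNorm_le hK _)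
  have hquad : C * ‖y t - y s‖ ^ 2 ≤ |C| * B * ‖y t - y s‖ :=
    calc C * ‖y t - y s‖ ^ 2 ≤ |C| * (‖y t - y s‖ * ‖y t - y s‖) := by
          rw [← sq]; gcongr; exact le_abs_self C
      _ ≤ |C| * (B * ‖y t - y s‖) := by gcongr
      _ = |C| * B * ‖y t - y s‖ := (mul_assoc _ _ _).symm
  linarith [h s hs t ht]

theorem HasQuadraticSubgradientOn.exists_dist_le_mul_dist (hab : a < b)
    (h : HasQuadraticSubgradientOn φ y ξ C (Icc a b)) (hφ : ContinuousOn φ (Icc a b))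
    (hy : ContinuousOn y (Icc a b)) (hK : ∀ᵐ t, t ∈ Ioc a b → ‖ξ t‖ ≤ K) :
    ∃ L, ∀ s ∈ Icc a b, ∀ t ∈ Icc a b, dist (φ s) (φ t) ≤ L * dist (y s) (y t) := by
  obtain ⟨B, hB⟩ := Metric.isBounded_iff.1 (isCompact_Icc.image_of_continuousOn hy).isBounded
  have hle : ∀ t ∈ Icc a b, ∀ s ∈ Icc a b, φ s - φ t ≤ (K + |C| * B) * ‖y t - y s‖ := by
    intro t ht
    refine le_on_Icc_of_ae_le_on_Ioc hab (by fun_prop) (by fun_prop) ?_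
    filter_upwards [hK] with s hξs hs
    have hsI := Ioc_subset_Icc_self hs
    exact h.sub_le_mul_norm_sub hsI ht (hξs hs) (dist_eq_norm (y t) (y s) ▸
      hB (mem_image_of_mem y ht) (mem_image_of_mem y hsI))
  refine ⟨K + |C| * B, fun s hs t ht => ?_⟩
  rw [Real.dist_eq, abs_sub_le_iff, dist_eq_norm]
  exact ⟨norm_sub_rev (y s) (y t) ▸ hle t ht s hs, hle s hs t ht⟩

theorem hasDerivAt_norm_sub_sq {v : V} {t : ℝ} (hy : HasDerivAt y v t) :
    HasDerivAt (fun s => ‖y s - y t‖ ^ 2) 0 t := by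
  have hO : (fun s => ‖y s - y t‖ ^ 2) =O[𝓝 t] fun s => ‖s - t‖ ^ 2 :=
    hy.isBigO_sub.norm_norm.pow 2
  rw [hasDerivAt_iff_isLittleO]
  simpa using hO.trans_isLittleO (isLittleO_pow_sub_sub t one_lt_two)

theorem eq_apply_of_hasDerivAt_of_eventually_le {m t : ℝ} {v : V} {p : V →L[ℝ] ℝ}
    (hφ : HasDerivAt φ m t) (hy : HasDerivAt y v t)
    (hp : ∀ᶠ s in 𝓝 t, p (y s - y t) - C * ‖y s - y t‖ ^ 2 ≤ φ s - φ t) : m = p v := by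
  have hderiv : HasDerivAt (fun s => φ s - p (y s - y t) + C * ‖y s - y t‖ ^ 2)
      (m - p v + C * 0) t :=
    (hφ.sub (p.hasFDerivAt.comp_hasDerivAt t (hy.sub_const (y t)))).add
      ((hasDerivAt_norm_sub_sq hy).const_mul C)
  have hmin : IsLocalMin (fun s => φ s - p (y s - y t) + C * ‖y s - y t‖ ^ 2) t := by
    filter_upwards [hp] with s hs
    simp only [sub_self, map_zero, norm_zero]
    linarith
  linarith [hmin.hasDerivAt_eq_zero hderiv]

theorem HasQuadraticSubgradientOn.ae_deriv_eq
    (h : HasQuadraticSubgradientOn φ y ξ C (Icc a b)) (hφ : AbsolutelyContinuousOnInterval φ a b)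
    (hy' : ∀ᵐ t, t ∈ Ioo a b → HasDerivAt y (y' t) t) :
    ∀ᵐ t, t ∈ Ioo a b → deriv φ t = ξ t (y' t) := by
  filter_upwards [hφ.ae_differentiableAt, hy'] with t hφt hyt ht
  have htI := Ioo_subset_Icc_self ht
  refine eq_apply_of_hasDerivAt_of_eventually_le (C := C)
    (hφt (Icc_subset_uIcc htI)).hasDerivAt (hyt ht) ?_
  filter_upwards [Ioo_mem_nhds ht.1 ht.2] with s hs
  exact h t htI s (Ioo_subset_Icc_self hs)

theorem HasQuadraticSubgradientOn.integrableOn_and_sub_eq_integral (hab : a ≤ b)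
    (h : HasQuadraticSubgradientOn φ y ξ C (Icc a b)) (hφ : ContinuousOn φ (Icc a b))
    (hy : AbsolutelyContinuousOnInterval y a b)
    (hy' : ∀ᵐ t, t ∈ Ioo a b → HasDerivAt y (y' t) t)
    (hK : ∀ᵐ t, t ∈ Ioc a b → ‖ξ t‖ ≤ K) :
    IntegrableOn (fun t => ξ t (y' t)) (Ioc a b) ∧ φ b - φ a = ∫ t in Ioc a b, ξ t (y' t) := by
  rcases hab.eq_or_lt with rfl | hlt
  · simp
  obtain ⟨L, hL⟩ :=
    h.exists_dist_le_mul_dist hlt hφ (uIcc_of_le hab ▸ hy.continuousOn) hK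
  have hφac : AbsolutelyContinuousOnInterval φ a b :=
    absolutelyContinuousOnInterval_of_dist_le_mul hy (uIcc_of_le hab ▸ hL)
  have hderiv : deriv φ =ᵐ[volume.restrict (Ioc a b)] fun t => ξ t (y' t) := by
    rw [← restrict_Ioo_eq_restrict_Ioc]
    exact (ae_restrict_iff' measurableSet_Ioo).2 (h.ae_deriv_eq hφac hy')
  constructor
  · exact ((intervalIntegrable_iff_integrableOn_Ioc_of_le hab).1
      hφac.intervalIntegrable_deriv).congr hderiv
  · rw [← hφac.integral_deriv_eq_sub, intervalIntegral.integral_of_le hab]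
    exact integral_congr_ae hderiv

end QuadraticSubgradient

section Energy

variable {Z V : Type*} [NormedAddCommGroup Z] [NormedSpace ℝ Z] [NormedAddCommGroup V]
  [NormedSpace ℝ V] {j : Z →L[ℝ] V} {A : Z →L[ℝ] Z →L[ℝ] ℝ} {F : Z → ℝ} {DF : Z → V →L[ℝ] ℝ}
  {S : Set Z} {L : ℝ≥0} {α : ℝ}

theorem abs_sub_sub_apply_le_of_lipschitzOnWith (hS : Convex ℝ S)
    (hF : ∀ u ∈ S, HasFDerivWithinAt F ((DF u).comp j) S u) (hDF : LipschitzOnWith L DF S)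
    {u v : Z} (hu : u ∈ S) (hv : v ∈ S) :
    |F v - F u - DF u (j (v - u))| ≤ L * ‖v - u‖ * ‖j (v - u)‖ := by
  obtain ⟨w, hw, hFw⟩ := domain_mvt hF hS hu hv
  rw [hFw]
  refine (DF w - DF u).le_of_opNorm_le ?_ (j (v - u))
  calc ‖DF w - DF u‖ ≤ L * ‖w - u‖ := hDF.norm_sub_le (hS.segment_subset hu hv hw) hu
    _ ≤ L * ‖v - u‖ := by gcongr; exact norm_sub_le_of_mem_segment hw

/-- The energy functional `I(u) = ½⟨Au, u⟩ + F(u)`, with the operator `A : Z → Z*` given as a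
bilinear form. -/
noncomputable def energy (A : Z →L[ℝ] Z →L[ℝ] ℝ) (F : Z → ℝ) (u : Z) : ℝ :=
  1 / 2 * A u u + F u

theorem energy_sub (hA : ∀ u v, A u v = A v u) (u v : Z) :
    energy A F v - energy A F u = A u (v - u) + 1 / 2 * A (v - u) (v - u) + (F v - F u) := by
  simp only [energy, map_sub, sub_apply, hA v u]
  ring

theorem le_energy_sub (hA : ∀ u v, A u v = A v u) (hα : 0 < α)
    (hA_ell : ∀ u, α * ‖u‖ ^ 2 ≤ A u u) (hS : Convex ℝ S)
    (hF : ∀ u ∈ S, HasFDerivWithinAt F ((DF u).comp j) S u) (hDF : LipschitzOnWith L DF S)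
    {u v : Z} (hu : u ∈ S) (hv : v ∈ S) :
    A u (v - u) + DF u (j (v - u)) - L ^ 2 / (2 * α) * ‖j (v - u)‖ ^ 2 ≤
      energy A F v - energy A F u := by
  have htaylor := (abs_le.1 (abs_sub_sub_apply_le_of_lipschitzOnWith hS hF hDF hu hv)).1
  have hyoung : L * ‖v - u‖ * ‖j (v - u)‖ ≤
      α / 2 * ‖v - u‖ ^ 2 + L ^ 2 / (2 * α) * ‖j (v - u)‖ ^ 2 := by
    have hsq : 0 ≤ (α * ‖v - u‖ - L * ‖j (v - u)‖) ^ 2 / (2 * α) := by positivity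
    have hexpand : (α * ‖v - u‖ - L * ‖j (v - u)‖) ^ 2 / (2 * α) =
        α / 2 * ‖v - u‖ ^ 2 + L ^ 2 / (2 * α) * ‖j (v - u)‖ ^ 2 -
          L * ‖v - u‖ * ‖j (v - u)‖ := by
      field_simp
      ring
    linarith
  rw [energy_sub hA]
  linarith [hA_ell (v - u)]

theorem stmt19_general (hA : ∀ u v, A u v = A v u) (hα : 0 < α)
    (hA_ell : ∀ u, α * ‖u‖ ^ 2 ≤ A u u) (hS : Convex ℝ S)
    (hF : ∀ u ∈ S, HasFDerivWithinAt F ((DF u).comp j) S u) (hDF : LipschitzOnWith L DF S)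
    {T K : ℝ} {z : ℝ → Z} {zd : ℝ → V} {ξ : ℝ → V →L[ℝ] ℝ} (hz : ∀ t ∈ Icc 0 T, z t ∈ S)
    (hz_ac : AbsolutelyContinuousOnInterval (fun t => j (z t)) 0 T)
    (hzd : ∀ᵐ t, t ∈ Ioo 0 T → HasDerivAt (fun t => j (z t)) (zd t) t)
    (hξ : ∀ t ∈ Icc 0 T, ∀ w, ξ t (j w) = A (z t) w + DF (z t) (j w))
    (hξ_bd : ∀ᵐ t, t ∈ Ioc 0 T → ‖ξ t‖ ≤ K)
    (hI : ContinuousOn (fun t => energy A F (z t)) (Icc 0 T))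
    {t₁ t₂ : ℝ} (ht₁ : 0 ≤ t₁) (ht₁₂ : t₁ ≤ t₂) (ht₂ : t₂ ≤ T) :
    IntegrableOn (fun r => ξ r (zd r)) (Ioc t₁ t₂) ∧
      energy A F (z t₂) - energy A F (z t₁) = ∫ r in Ioc t₁ t₂, ξ r (zd r) := by
  have hsub : HasQuadraticSubgradientOn (fun t => energy A F (z t)) (fun t => j (z t)) ξ
      (L ^ 2 / (2 * α)) (Icc 0 T) := by
    intro s hs t ht
    rw [← map_sub, hξ s hs]
    exact le_energy_sub hA hα hA_ell hS hF hDF (hz s hs) (hz t ht)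
  have hIcc : Icc t₁ t₂ ⊆ Icc 0 T := Icc_subset_Icc ht₁ ht₂
  have huIcc : uIcc t₁ t₂ ⊆ uIcc 0 T := by
    rwa [uIcc_of_le ht₁₂, uIcc_of_le (ht₁.trans (ht₁₂.trans ht₂))]
  exact (hsub.mono hIcc).integrableOn_and_sub_eq_integral ht₁₂ (hI.mono hIcc) (hz_ac.mono huIcc)
    (hzd.mono fun t h ht => h (Ioo_subset_Ioo ht₁ ht₂ ht))
    (hξ_bd.mono fun t h ht => h (Ioc_subset_Ioc ht₁ ht₂ ht))

end Energy

end

/-- Integrated chain rule for the energy (Proposition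
`prop.chainrules` of the paper): if `z ∈ W^{1,1}((0,T);V) ∩ L^∞((0,T);Z)`,
`DI(z(t)) = A z(t) + DF(z(t))` extends for every `t` to `ξ(t) ∈ V*` with
`ess sup ‖ξ(t)‖_{V*} < ∞`, and `t ↦ I(z(t))` is continuous, then
`I(z(t₂)) − I(z(t₁)) = ∫_{t₁}^{t₂} ⟨ξ(r), ż(r)⟩ dr` for all
`0 ≤ t₁ ≤ t₂ ≤ T`, where `I(z) = ½⟨Az,z⟩ + F(z)`. -/
theorem stmt19
    {Z V X : Type*}
    [NormedAddCommGroup Z] [InnerProductSpace ℝ Z] [CompleteSpace Z]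
    [TopologicalSpace.SeparableSpace Z]
    [NormedAddCommGroup V] [InnerProductSpace ℝ V] [CompleteSpace V]
    [TopologicalSpace.SeparableSpace V]
    [NormedAddCommGroup X] [NormedSpace ℝ X]
    (jZV : Z →L[ℝ] V) (hjZV_inj : Function.Injective jZV)
    (hjZV_cpt : IsCompactOperator jZV)
    (jVX : V →L[ℝ] X) (hjVX_inj : Function.Injective jVX)
    (A : Z →L[ℝ] Z →L[ℝ] ℝ) (hA_symm : ∀ z w : Z, A z w = A w z)
    (α : ℝ) (hα : 0 < α) (hA_ell : ∀ z : Z, α * ‖z‖ ^ 2 ≤ A z z)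
    (R : X → ℝ) (hR_conv : ConvexOn ℝ Set.univ R) (hR_cont : Continuous R)
    (hR_hom : ∀ t : ℝ, 0 ≤ t → ∀ x : X, R (t • x) = t * R x)
    (c C : ℝ) (hc : 0 < c) (hC : 0 < C)
    (hR_low : ∀ x : X, c * ‖x‖ ≤ R x) (hR_up : ∀ x : X, R x ≤ C * ‖x‖)
    (F : Z → ℝ) (hF_nonneg : ∀ z : Z, 0 ≤ F z)
    (DF : Z → V →L[ℝ] ℝ)
    (hDF : ∀ z : Z, HasFDerivAt F ((DF z).comp jZV) z)
    (D2F : Z → Z →L[ℝ] V →L[ℝ] ℝ)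
    (hD2F : ∀ z : Z, HasFDerivAt DF (D2F z) z)
    (hD2F_cont : Continuous D2F)
    (C₀ q : ℝ) (hC₀ : 0 < C₀) (hq : 1 ≤ q)
    (hD2F_bound : ∀ z v : Z, ‖D2F z v‖ ≤ C₀ * (1 + ‖z‖ ^ q) * ‖v‖)
    (T : ℝ) (hT : 0 < T)
    (z : ℝ → Z) (zd : ℝ → V)
    -- z ∈ L^∞((0,T);Z)
    (hbd : ∃ M : ℝ, ∀ t ∈ Set.Icc (0:ℝ) T, ‖z t‖ ≤ M)
    -- z absolutely continuous into V with a.e. derivative ż ∈ L¹((0,T);V)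
    (hzd_int : IntegrableOn zd (Set.Ioc 0 T) volume)
    (hAC : ∀ t ∈ Set.Icc (0:ℝ) T,
      jZV (z t) = jZV (z 0) + ∫ r in Set.Ioc 0 t, zd r)
    -- DI(z(t)) extends to ξ(t) ∈ V*, essentially bounded
    (ξ : ℝ → V →L[ℝ] ℝ)
    (hξ : ∀ t ∈ Set.Icc (0:ℝ) T, ∀ w : Z,
      ξ t (jZV w) = A (z t) w + DF (z t) (jZV w))
    (hξ_bd : ∃ K : ℝ, ∀ᵐ t : ℝ ∂volume, t ∈ Set.Ioc (0:ℝ) T → ‖ξ t‖ ≤ K)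
    -- t ↦ I(z(t)) is continuous
    (hIcont : ContinuousOn (fun t => 1 / 2 * A (z t) (z t) + F (z t))
      (Set.Icc 0 T)) :
    ∀ t₁ t₂ : ℝ, 0 ≤ t₁ → t₁ ≤ t₂ → t₂ ≤ T →
      (1 / 2 * A (z t₂) (z t₂) + F (z t₂))
          - (1 / 2 * A (z t₁) (z t₁) + F (z t₁)) =
        ∫ r in Set.Ioc t₁ t₂, ξ r (zd r) := by
  obtain ⟨M, hM⟩ := hbd
  obtain ⟨K, hK⟩ := hξ_bd
  intro t₁ t₂ ht₁ ht₁₂ ht₂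
  exact (stmt19_general hA_symm hα hA_ell (convex_closedBall 0 M)
    (fun u _ => (hDF u).hasFDerivWithinAt)
    (lipschitzOnWith_closedBall_of_norm_hasFDerivAt_apply_le hC₀.le (zero_le_one.trans hq) hD2F
      hD2F_bound M)
    (fun t ht => mem_closedBall_zero_iff.2 (hM t ht))
    (absolutelyContinuousOnInterval_of_eq_add_integral hT.le hzd_int hAC)
    (ae_hasDerivAt_of_eq_add_integral hzd_int hAC) hξ hK hIcont ht₁ ht₁₂ ht₂).2
end
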